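/- Let d ≥ 1, 0 < λ ≤ Λ and Θ ≥ 0, and assume ᾱ ∈ (0,1) and C₀ > 0 are such that for every uniformly (λ,Λ)-elliptic G : Sym(d) → ℝ, every viscosity solution h of G(D²h) = 0 in B₁ satisfies ‖h‖_{C^{1,ᾱ}(B_{3/4})} ≤ C₀‖h‖_{L∞(B₁)}. Then for every δ > 0 there exists ε > 0, depending only on δ, d, λ, Λ and Θ, with the following property: whenever F : Sym(d) → ℝ is uniformly (λ,Λ)-elliptic, θ : cl(B₁) → ℝ is continuous with −1 < θ(x) ≤ Θ for all x, q ∈ ℝ^d, f : B₁ → ℝ is continuous with ‖f(·)(1 + |q|)^{−θ(·)}‖_{L∞(B₁)} ≤ ε, and u ∈ C(B₁) is a normalized viscosity solution of |q + Du|^{θ(x)} F(D²u) = f(x) in B₁, then there exists a function h of class C^{1,ᾱ} on B_{3/4} with ‖u − h‖_{L∞(B_{1/2})} ≤ δ and ‖h‖_{C^{1,ᾱ}(B_{3/4})} ≤ C, where C depends only on d, λ and Λ. -/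

import Mathlib

/-!
The proof is by contradiction and compactness: solutions `u n` with smallness `ε n → 0` converge to
a solution `h` of a uniformly elliptic equation `G (D²h) = 0`, to which the assumed `C^{1,α}`
estimate applies on small balls. Viscosity inequalities are tested with quadratic polynomials, and
supersolutions are subsolutions for the reflected operator `M ↦ -F (-M)`.

*Equicontinuity.* A touching paraboloid of slope `p` with `|q + p| ≥ κ` satisfies `F M ≥ -C ε`, with
`C` depending on `κ` and on a bound for `|p|`, but not on `q`. If `|q|` is large this covers all
moderate slopes, and if `|q|` is bounded it covers all large slopes. The Ishii–Lions doubling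
argument only uses slopes in one range `N / 4 ≤ |p| ≤ 2 N`, so in both cases it yields a Lipschitz
bound independent of `q`. The theorem on sums it needs comes from sup-convolutions and a
Jensen–Alexandrov lemma. The latter rests on the resolvent `R = (1 + ∂f)⁻¹` of a convex function,
which is `1`-Lipschitz: `f` has a second-order expansion at `R z` as soon as `R` is differentiable
at `z` with invertible derivative, and the remaining points `z` have a null image, by Rademacher's
theorem and Sard's lemma.

*Passage to the limit.* Suppose that a paraboloid of Hessian `M` touches `h` strictly from above
while `G M < 0`. For each small tilt of it, the slopes at nearby contact points with `u n` must
approach the critical slope `-q n`, since elsewhere the equation would give `G M ≥ 0`. So the slope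
of the tilted paraboloid at its limiting contact point is `-lim q n`, whatever the tilt. Hence `M`
is invertible, every point near the original one is a contact point, and there the increments of
`h - linear` are all bounded by the single form `M / 2`; so `h - linear` is constant, `M ≥ 0`, and
`G M ≥ 0` by ellipticity, a contradiction.
-/

open Metric Set Filter
open scoped RealInnerProductSpace

noncomputable section

abbrev Euc (d : ℕ) := EuclideanSpace ℝ (Fin d)
abbrev Mat (d : ℕ) := Matrix (Fin d) (Fin d) ℝ

noncomputable def matOpNorm {n : Type*} [Fintype n] [DecidableEq n]
    (M : Matrix n n ℝ) : ℝ := ‖Matrix.toEuclideanCLM (𝕜 := ℝ) M‖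

def UniformlyElliptic {d : ℕ} (lam Lam : ℝ) (F : Mat d → ℝ) : Prop :=
  F 0 = 0 ∧ ∀ M N : Mat d, M.IsHermitian → N.PosSemidef →
    lam * matOpNorm N ≤ F (M + N) - F M ∧ F (M + N) - F M ≤ Lam * matOpNorm N

noncomputable def hessM {d : ℕ} (φ : Euc d → ℝ) (x : Euc d) : Mat d :=
  Matrix.of fun i j =>
    iteratedFDeriv ℝ 2 φ x ![EuclideanSpace.single i 1, EuclideanSpace.single j 1]

def ViscSubSol {d : ℕ} (F : Mat d → ℝ) (θ f : Euc d → ℝ) (q : Euc d) (u : Euc d → ℝ) : Prop :=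
  ∀ x₀ ∈ ball (0 : Euc d) 1, ∀ φ : Euc d → ℝ, ContDiffAt ℝ 2 φ x₀ →
    IsLocalMax (fun x => u x - φ x) x₀ → q + gradient φ x₀ ≠ 0 →
      f x₀ ≤ ‖q + gradient φ x₀‖ ^ (θ x₀) * F (hessM φ x₀)

def ViscSuperSol {d : ℕ} (F : Mat d → ℝ) (θ f : Euc d → ℝ) (q : Euc d) (u : Euc d → ℝ) : Prop :=
  ∀ x₀ ∈ ball (0 : Euc d) 1, ∀ φ : Euc d → ℝ, ContDiffAt ℝ 2 φ x₀ →
    IsLocalMin (fun x => u x - φ x) x₀ → q + gradient φ x₀ ≠ 0 →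
      ‖q + gradient φ x₀‖ ^ (θ x₀) * F (hessM φ x₀) ≤ f x₀

def ViscSol {d : ℕ} (F : Mat d → ℝ) (θ f : Euc d → ℝ) (q : Euc d) (u : Euc d → ℝ) : Prop :=
  ViscSubSol F θ f q u ∧ ViscSuperSol F θ f q u

def ViscSubSolPure {d : ℕ} (F : Mat d → ℝ) (g : Euc d → ℝ) (u : Euc d → ℝ)
    (s : Set (Euc d)) : Prop :=
  ∀ x₀ ∈ s, ∀ φ : Euc d → ℝ, ContDiffAt ℝ 2 φ x₀ →
    IsLocalMax (fun x => u x - φ x) x₀ → g x₀ ≤ F (hessM φ x₀)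

def ViscSuperSolPure {d : ℕ} (F : Mat d → ℝ) (g : Euc d → ℝ) (u : Euc d → ℝ)
    (s : Set (Euc d)) : Prop :=
  ∀ x₀ ∈ s, ∀ φ : Euc d → ℝ, ContDiffAt ℝ 2 φ x₀ →
    IsLocalMin (fun x => u x - φ x) x₀ → F (hessM φ x₀) ≤ g x₀

def ViscSolPure {d : ℕ} (F : Mat d → ℝ) (g : Euc d → ℝ) (u : Euc d → ℝ)
    (s : Set (Euc d)) : Prop :=
  ViscSubSolPure F g u s ∧ ViscSuperSolPure F g u s

open Asymptotics MeasureTheory Topology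

/-! ### Convex functions: resolvents and Alexandrov's theorem -/

section Subgradient

variable {H : Type*} [NormedAddCommGroup H] [InnerProductSpace ℝ H]
  {f : H → ℝ} {g R : H → H} {x y z p r : H}

/-- `p` is a subgradient of `f` at `x`. Convexity of `f` is expressed by a selection of
subgradients, that is, a map `g` with `∀ x, IsSubgrad f x (g x)`. -/
def IsSubgrad (f : H → ℝ) (x p : H) : Prop := ∀ y, f x + ⟪p, y - x⟫ ≤ f y

lemma IsSubgrad.inner_sub_nonneg (hx : IsSubgrad f x p) (hy : IsSubgrad f y r) :
    0 ≤ ⟪p - r, x - y⟫ := by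
  have hxy := hx y
  have hyx := hy x
  rw [← neg_sub x y, inner_neg_right] at hxy
  rw [inner_sub_left]
  linarith

lemma map_add_smul_sub_le_of_isSubgrad (hg : ∀ x, IsSubgrad f x (g x)) {t : ℝ} (ht₀ : 0 ≤ t)
    (ht₁ : t ≤ 1) (x y : H) : f (x + t • (y - x)) ≤ f x + t * (f y - f x) := by
  have hx := hg (x + t • (y - x)) x
  have hy := hg (x + t • (y - x)) y
  rw [show x - (x + t • (y - x)) = -t • (y - x) by module, inner_smul_right] at hx
  rw [show y - (x + t • (y - x)) = (1 - t) • (y - x) by module, inner_smul_right] at hy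
  linear_combination (1 - t) * hx + t * hy

/-- `R` is the resolvent `(1 + ∂f)⁻¹`. -/
def IsResolvent (f : H → ℝ) (R : H → H) : Prop := ∀ z, IsSubgrad f (R z) (z - R z)

lemma IsResolvent.norm_sub_sq_le_inner (hR : IsResolvent f R) (z z' : H) :
    ‖R z - R z'‖ ^ 2 ≤ ⟪z - z', R z - R z'⟫ := by
  have := (hR z).inner_sub_nonneg (hR z')
  rw [show z - R z - (z' - R z') = (z - z') - (R z - R z') by abel, inner_sub_left,
    real_inner_self_eq_norm_sq] at this
  linarith

lemma IsResolvent.lipschitzWith (hR : IsResolvent f R) : LipschitzWith 1 R := by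
  refine LipschitzWith.of_dist_le_mul fun z z' => ?_
  rw [dist_eq_norm, dist_eq_norm, NNReal.coe_one, one_mul]
  rcases (norm_nonneg (R z - R z')).eq_or_lt with h | h
  · exact h ▸ norm_nonneg _
  · nlinarith [hR.norm_sub_sq_le_inner z z', real_inner_le_norm (z - z') (R z - R z')]

lemma IsResolvent.apply_add (hR : IsResolvent f R) (h : IsSubgrad f x p) : R (x + p) = x := by
  have := (hR (x + p)).inner_sub_nonneg h
  rw [show x + p - R (x + p) - p = -(R (x + p) - x) by abel, inner_neg_left,
    real_inner_self_eq_norm_sq] at this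
  exact sub_eq_zero.1 (norm_eq_zero.1 (by nlinarith [norm_nonneg (R (x + p) - x)]))

lemma isSubgrad_of_forall_add_norm_sq_le (hg : ∀ x, IsSubgrad f x (g x))
    (hx : ∀ y, f x + ‖x - z‖ ^ 2 / 2 ≤ f y + ‖y - z‖ ^ 2 / 2) : IsSubgrad f x (z - x) := by
  intro y
  have hsegment : ∀ᶠ t : ℝ in 𝓝[>] 0,
      ⟪z - x, y - x⟫ ≤ f y - f x + t * (‖y - x‖ ^ 2 / 2) := by
    filter_upwards [Ioo_mem_nhdsGT one_pos] with t ht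
    have hmin := hx (x + t • (y - x))
    have hconv := map_add_smul_sub_le_of_isSubgrad hg ht.1.le ht.2.le x y
    rw [show x + t • (y - x) - z = t • (y - x) - (z - x) by module,
      norm_sub_sq_real (t • (y - x)), real_inner_smul_left, norm_smul, mul_pow, Real.norm_eq_abs,
      sq_abs, norm_sub_rev x z, real_inner_comm] at hmin
    exact le_of_mul_le_mul_left (by linarith) ht.1
  have hlim : Tendsto (fun t : ℝ => f y - f x + t * (‖y - x‖ ^ 2 / 2)) (𝓝[>] 0)
      (𝓝 (f y - f x + 0 * (‖y - x‖ ^ 2 / 2))) :=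
    (Continuous.tendsto (by fun_prop) 0).mono_left nhdsWithin_le_nhds
  linarith [ge_of_tendsto hlim hsegment]

lemma exists_isResolvent [FiniteDimensional ℝ H] (hf : Continuous f)
    (hg : ∀ x, IsSubgrad f x (g x)) : ∃ R, IsResolvent f R := by
  suffices ∀ z, ∃ x, IsSubgrad f x (z - x) from ⟨_, fun z => (this z).choose_spec⟩
  intro z
  have hdist : Tendsto (fun x : H => ‖x - z‖) (cocompact H) atTop :=
    tendsto_atTop_mono (fun x => by linarith [norm_sub_norm_le x z])
      (tendsto_atTop_add_const_right _ (-‖z‖) (tendsto_norm_cocompact_atTop (E := H)))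
  have hpoly : Tendsto (fun s : ℝ => f z + s * (s / 2 - ‖g z‖)) atTop atTop :=
    tendsto_atTop_add_const_left _ _ (tendsto_id.atTop_mul_atTop₀
      (tendsto_atTop_add_const_right _ _ (tendsto_id.atTop_div_const (by norm_num))))
  have hcoercive : Tendsto (fun x => f x + ‖x - z‖ ^ 2 / 2) (cocompact H) atTop := by
    refine tendsto_atTop_mono (fun x => ?_) (hpoly.comp hdist)
    have := neg_le_of_abs_le (abs_real_inner_le_norm (g z) (x - z))
    simp only [Function.comp]
    nlinarith [hg z x]
  obtain ⟨x, hx⟩ :=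
    (by fun_prop : Continuous fun x => f x + ‖x - z‖ ^ 2 / 2).exists_forall_le hcoercive
  exact ⟨x, isSubgrad_of_forall_add_norm_sq_le hg hx⟩

lemma IsResolvent.monotone_inner_ray (hR : IsResolvent f R) (z e : H) :
    Monotone fun t : ℝ => ⟪e, R (z + t • e)⟫ := by
  intro s t hst
  rcases hst.eq_or_lt with rfl | hlt
  · exact le_rfl
  have h := hR.norm_sub_sq_le_inner (z + t • e) (z + s • e)
  rw [show z + t • e - (z + s • e) = (t - s) • e by module, real_inner_smul_left,
    inner_sub_right] at h
  exact sub_nonneg.1 (nonneg_of_mul_nonneg_right ((sq_nonneg _).trans h) (sub_pos.2 hlt))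

lemma IsResolvent.mul_le_norm_sub_of_sphere (hR : IsResolvent f R) {κ s : ℝ} (hκ : 0 ≤ κ)
    (hs : 0 < s) {z₀ : H} (hsphere : ∀ w, ‖w - z₀‖ = s → κ * s ≤ ‖R w - R z₀‖)
    (hz : s ≤ ‖z - z₀‖) : κ ^ 2 * s ≤ ‖R z - R z₀‖ := by
  have hn : 0 < ‖z - z₀‖ := hs.trans_le hz
  obtain ⟨e, he, hze⟩ : ∃ e : H, ‖e‖ = 1 ∧ z = z₀ + ‖z - z₀‖ • e := by
    refine ⟨‖z - z₀‖⁻¹ • (z - z₀), ?_, ?_⟩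
    · rw [norm_smul, norm_inv, norm_norm, inv_mul_cancel₀ hn.ne']
    · rw [smul_inv_smul₀ hn.ne', add_sub_cancel]
  have hfar := hsphere (z₀ + s • e) (by simp [norm_smul, he, hs.le])
  have hfirm := hR.norm_sub_sq_le_inner (z₀ + s • e) z₀
  rw [add_sub_cancel_left, real_inner_smul_left] at hfirm
  have hnear : κ ^ 2 * s ≤ ⟪e, R (z₀ + s • e) - R z₀⟫ := by
    have := pow_le_pow_left₀ (by positivity) hfar 2
    exact le_of_mul_le_mul_left (by linarith) hs
  calc κ ^ 2 * s ≤ ⟪e, R (z₀ + s • e) - R z₀⟫ := hnear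
    _ ≤ ⟪e, R z - R z₀⟫ := by
        have := hR.monotone_inner_ray z₀ e hz
        rw [inner_sub_right, inner_sub_right, hze]
        simpa using this
    _ ≤ ‖R z - R z₀‖ := by simpa [he] using real_inner_le_norm e (R z - R z₀)

lemma IsResolvent.continuousAt_add_subgrad (hR : IsResolvent f R)
    (hg : ∀ x, IsSubgrad f x (g x)) {B : H ≃L[ℝ] H}
    (hB : HasFDerivAt R (B : H →L[ℝ] H) (x + g x)) : ContinuousAt (fun y => y + g y) x := by
  obtain ⟨c, hc, hbound⟩ := (hB.isTheta_sub B.toHomeomorph.isInducing).isBigO_symm.exists_pos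
  obtain ⟨ρ, hρ, hball⟩ := Metric.eventually_nhds_iff.1 hbound.bound
  refine Metric.continuousAt_iff.2 fun ε hε => ?_
  set s := min ε ρ / 2 with hs
  have hs₀ : 0 < s := by positivity
  have hsphere : ∀ w, ‖w - (x + g x)‖ = s → c⁻¹ * s ≤ ‖R w - R (x + g x)‖ := fun w hw => by
    rw [inv_mul_le_iff₀ hc, ← hw]
    refine hball ?_
    rw [dist_eq_norm, hw]
    linarith [min_le_right ε ρ]
  refine ⟨c⁻¹ ^ 2 * s, by positivity, fun y hy => ?_⟩
  rw [dist_eq_norm] at hy ⊢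
  by_contra! hfar
  have := hR.mul_le_norm_sub_of_sphere (by positivity) hs₀ hsphere (z := y + g y)
    (by linarith [min_le_left ε ρ])
  rw [hR.apply_add (hg y), hR.apply_add (hg x)] at this
  linarith

lemma IsResolvent.hasFDerivAt_subgrad (hR : IsResolvent f R) (hg : ∀ x, IsSubgrad f x (g x))
    {B : H ≃L[ℝ] H} (hB : HasFDerivAt R (B : H →L[ℝ] H) (x + g x)) :
    HasFDerivAt g ((B.symm : H →L[ℝ] H) - .id ℝ H) x := by
  have hinv : HasFDerivAt (fun y => y + g y) (B.symm : H →L[ℝ] H) x :=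
    .of_local_left_inverse (hR.continuousAt_add_subgrad hg hB) hB
      (.of_forall fun y => hR.apply_add (hg y))
  convert hinv.sub (hasFDerivAt_id x) using 1
  ext y
  simp

/-- Every non-differentiability point of `g` is the image under the resolvent of a point where the
resolvent is not differentiable (Rademacher) or has a singular derivative (Sard). -/
theorem hausdorffMeasure_not_differentiableAt_subgrad [FiniteDimensional ℝ H] [MeasurableSpace H]
    [BorelSpace H] (hf : Continuous f) (hg : ∀ x, IsSubgrad f x (g x)) :
    μH[Module.finrank ℝ H] {x | ¬ DifferentiableAt ℝ g x} = 0 := by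
  obtain ⟨R, hR⟩ := exists_isResolvent hf hg
  set m : Measure H := μH[Module.finrank ℝ H] with hm
  set N : Set H := {z | ¬ DifferentiableAt ℝ R z}
  set S : Set H := {z | DifferentiableAt ℝ R z ∧ (fderiv ℝ R z).det = 0}
  have hN : m (R '' N) = 0 := by
    have hle := (hR.lipschitzWith.lipschitzOnWith (s := N)).hausdorffMeasure_image_le
      (d := (Module.finrank ℝ H : ℝ)) (by positivity)
    rw [← hm, show m N = 0 from hR.lipschitzWith.ae_differentiableAt (μ := m), mul_zero] at hle
    exact le_antisymm hle bot_le
  have hS : m (R '' S) = 0 :=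
    addHaar_image_eq_zero_of_det_fderivWithin_eq_zero m
      (fun z hz => hz.1.hasFDerivAt.hasFDerivWithinAt) (fun z hz => hz.2)
  refine measure_mono_null (fun x hx => ?_) (measure_union_null hN hS)
  have hRx : R (x + g x) = x := hR.apply_add (hg x)
  by_cases hd : DifferentiableAt ℝ R (x + g x)
  · refine Or.inr ⟨_, ⟨hd, ?_⟩, hRx⟩
    by_contra hdet
    refine hx (hR.hasFDerivAt_subgrad hg
      (B := (fderiv ℝ R (x + g x)).toContinuousLinearEquivOfDetNeZero hdet) ?_).differentiableAt
    rw [ContinuousLinearMap.coe_toContinuousLinearEquivOfDetNeZero]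
    exact hd.hasFDerivAt
  · exact Or.inl ⟨_, hd, hRx⟩

end Subgradient

section Hessian

lemma le_of_forall_sub_le_mul_sq {ψ : ℝ → ℝ} {C : ℝ}
    (h : ∀ t s, 0 ≤ t → t ≤ s → s ≤ 1 → ψ s - ψ t ≤ C * (s - t) ^ 2) : ψ 1 ≤ ψ 0 := by
  have hsum : ∀ m : ℕ, ψ 1 - ψ 0 ≤ C * (1 / ((m : ℝ) + 1)) := by
    intro m
    have hm : (0 : ℝ) < (m : ℝ) + 1 := by positivity
    calc ψ 1 - ψ 0
        = ∑ k ∈ Finset.range (m + 1),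
            (ψ ((k + 1 : ℕ) / ((m : ℝ) + 1)) - ψ (k / ((m : ℝ) + 1))) := by
          rw [Finset.sum_range_sub fun k : ℕ => ψ (k / ((m : ℝ) + 1))]
          simp [div_self hm.ne']
      _ ≤ ∑ k ∈ Finset.range (m + 1), C * (1 / ((m : ℝ) + 1)) ^ 2 := by
          refine Finset.sum_le_sum fun k hk => ?_
          have hk : ((k + 1 : ℕ) : ℝ) ≤ m + 1 := by exact_mod_cast Finset.mem_range.1 hk
          have hgap : ((k + 1 : ℕ) : ℝ) / (m + 1) - k / (m + 1) = 1 / (m + 1) := by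
            rw [← sub_div]
            simp
          have := h (k / ((m : ℝ) + 1)) ((k + 1 : ℕ) / ((m : ℝ) + 1)) (by positivity)
            (by gcongr; simp) ((div_le_one hm).2 hk)
          rwa [hgap] at this
      _ = C * (1 / ((m : ℝ) + 1)) := by
          rw [Finset.sum_const, Finset.card_range, nsmul_eq_mul]
          push_cast
          field_simp
  have hlim := (tendsto_one_div_add_atTop_nhds_zero_nat (𝕜 := ℝ)).const_mul C
  linarith [ge_of_tendsto' hlim hsum, mul_zero C]

variable {H : Type*} [NormedAddCommGroup H] [InnerProductSpace ℝ H]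
  {f : H → ℝ} {g : H → H} {x : H} {A : H →L[ℝ] H}

/-- `f` has at `x` a second-order expansion with gradient `p` and Hessian `A`. Unlike for a second
derivative, nothing is required of `f` at points other than `x`. -/
def HasHessianAt (f : H → ℝ) (p : H) (A : H →L[ℝ] H) (x : H) : Prop :=
  (fun h => f (x + h) - f x - ⟪p, h⟫ - ⟪A h, h⟫ / 2) =o[𝓝 0] fun h => ‖h‖ ^ 2

/-- The increments of `f` along a segment are squeezed between Riemann sums of the slope of `g`. -/
lemma abs_sub_le_of_forall_abs_inner_subgrad_sub_le (hg : ∀ x, IsSubgrad f x (g x))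
    {a b e : ℝ} {h : H}
    (hslope : ∀ t, 0 ≤ t → t ≤ 1 → |⟪g (x + t • h), h⟫ - a - t * b| ≤ e) :
    |f (x + h) - f x - a - b / 2| ≤ e := by
  have hinc : ∀ t s : ℝ, ⟪g (x + t • h), h⟫ * (s - t) ≤ f (x + s • h) - f (x + t • h) := by
    intro t s
    have := hg (x + t • h) (x + s • h)
    rw [show x + s • h - (x + t • h) = (s - t) • h by module, inner_smul_right] at this
    linarith
  have hsq : ∀ t s : ℝ, b / 2 * (s - t) ^ 2 ≤ |b| / 2 * (s - t) ^ 2 := fun t s => by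
    gcongr
    exact le_abs_self b
  have hupper := le_of_forall_sub_le_mul_sq (C := |b| / 2)
    (ψ := fun t => f (x + t • h) - t * a - t ^ 2 / 2 * b - t * e) fun t s ht hts hs => by
      have := mul_le_mul_of_nonneg_right (abs_le.1 (hslope s (ht.trans hts) hs)).2
        (sub_nonneg.2 hts)
      linarith [hinc s t, hsq t s]
  have hlower := le_of_forall_sub_le_mul_sq (C := |b| / 2)
    (ψ := fun t => -f (x + t • h) + t * a + t ^ 2 / 2 * b - t * e) fun t s ht hts hs => by
      have := mul_le_mul_of_nonneg_right (abs_le.1 (hslope t ht (hts.trans hs))).1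
        (sub_nonneg.2 hts)
      linarith [hinc t s, hsq t s]
  simp only [one_smul, zero_smul, add_zero] at hupper hlower
  exact abs_le.2 ⟨by linarith, by linarith⟩

theorem hasHessianAt_of_hasFDerivAt_subgrad (hg : ∀ x, IsSubgrad f x (g x))
    (hA : HasFDerivAt g A x) : HasHessianAt f (g x) A x := by
  refine isLittleO_iff.2 fun ε hε => ?_
  obtain ⟨r, hr, hgr⟩ := Metric.eventually_nhds_iff.1 ((hasFDerivAt_iff_isLittleO.1 hA).def hε)
  refine Metric.eventually_nhds_iff.2 ⟨r, hr, fun h hh => ?_⟩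
  rw [dist_zero_right] at hh
  rw [Real.norm_eq_abs, norm_pow, norm_norm]
  refine abs_sub_le_of_forall_abs_inner_subgrad_sub_le hg fun t ht ht₁ => ?_
  have hth : ‖t • h‖ ≤ ‖h‖ := by
    rw [norm_smul, Real.norm_of_nonneg ht]
    nlinarith [norm_nonneg h]
  have hlin := hgr (y := x + t • h) (by simpa [dist_eq_norm] using hth.trans_lt hh)
  rw [add_sub_cancel_left] at hlin
  calc |⟪g (x + t • h), h⟫ - ⟪g x, h⟫ - t * ⟪A h, h⟫|
      = |⟪g (x + t • h) - g x - A (t • h), h⟫| := by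
        rw [inner_sub_left, inner_sub_left, map_smul, real_inner_smul_left]
    _ ≤ ‖g (x + t • h) - g x - A (t • h)‖ * ‖h‖ := abs_real_inner_le_norm _ _
    _ ≤ ε * ‖h‖ * ‖h‖ := by gcongr; exact hlin.trans (by gcongr)
    _ = ε * ‖h‖ ^ 2 := by ring

end Hessian

section JensenAlexandrov

variable {H : Type*} [NormedAddCommGroup H] [InnerProductSpace ℝ H]
  {f T : H → ℝ} {g T' : H → H} {X₀ X Y P Q : H} {ρ C : ℝ}

/-- Over the ball of radius `ρ` around `X₀`, the function `Φ` tilted by the linear form `⟪P, ·⟫`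
attains its maximum at the point `X` of the smaller ball of radius `ρ / 2`. -/
def IsTiltedMax (Φ : H → ℝ) (X₀ : H) (ρ : ℝ) (P X : H) : Prop :=
  ‖X - X₀‖ < ρ / 2 ∧ ∀ Z, ‖Z - X₀‖ ≤ ρ → Φ Z - ⟪P, Z⟫ ≤ Φ X - ⟪P, X⟫

lemma IsTiltedMax.le_add_inner {Φ : H → ℝ} (h : IsTiltedMax Φ X₀ ρ P X) {v : H}
    (hv : ‖v‖ ≤ ρ / 2) : Φ (X + v) ≤ Φ X + ⟪P, v⟫ := by
  have hmem : ‖X + v - X₀‖ ≤ ρ := by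
    rw [add_sub_right_comm]
    linarith [norm_add_le (X - X₀) v, h.1]
  have := h.2 _ hmem
  rw [inner_add_right] at this
  linarith

lemma exists_isTiltedMax [FiniteDimensional ℝ H] {Φ : H → ℝ} (hΦ : Continuous Φ) {γ : ℝ}
    (hρ : 0 < ρ)
    (hgap : ∀ X, ρ / 2 ≤ ‖X - X₀‖ → ‖X - X₀‖ ≤ ρ → Φ X ≤ Φ X₀ - γ)
    (hP : ‖P‖ * ρ < γ) : ∃ X, IsTiltedMax Φ X₀ ρ P X := by
  obtain ⟨X, hXmem, hX⟩ := (ProperSpace.isCompact_closedBall X₀ ρ).exists_isMaxOn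
    ⟨X₀, by simpa using hρ.le⟩ (f := fun Z => Φ Z - ⟪P, Z⟫) (by fun_prop)
  have hXρ : ‖X - X₀‖ ≤ ρ := by simpa [dist_eq_norm] using hXmem
  have hmax : ∀ Z, ‖Z - X₀‖ ≤ ρ → Φ Z - ⟪P, Z⟫ ≤ Φ X - ⟪P, X⟫ := fun Z hZ =>
    hX (by simpa [dist_eq_norm] using hZ)
  refine ⟨X, ?_, hmax⟩
  by_contra! hfar
  have htilt : -⟪P, X - X₀⟫ ≤ ‖P‖ * ρ :=
    (neg_le_abs _).trans ((abs_real_inner_le_norm _ _).trans (by gcongr))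
  rw [inner_sub_right] at htilt
  linarith [hgap X hfar hXρ, hmax X₀ (by simpa using hρ.le)]

lemma IsTiltedMax.subgrad_eq (hg : ∀ X, IsSubgrad f X (g X))
    (hT : ∀ Z, T Z - T X - ⟪T' X, Z - X⟫ ≤ C * ‖Z - X‖ ^ 2) (hρ : 0 < ρ)
    (h : IsTiltedMax (fun Z => f Z - T Z) X₀ ρ P X) : g X = T' X + P := by
  set v := g X - T' X - P with hv
  have hinner : ⟪g X, v⟫ - ⟪T' X, v⟫ - ⟪P, v⟫ = ‖v‖ ^ 2 := by
    rw [← inner_sub_left, ← inner_sub_left, ← hv, real_inner_self_eq_norm_sq]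
  -- Moving from `X` by `t • v` gains `t ‖v‖²` to first order and loses only `C (t ‖v‖)²`.
  have hstep : ∀ᶠ t : ℝ in 𝓝[>] 0, ‖v‖ ^ 2 ≤ t * (C * ‖v‖ ^ 2) := by
    have hsmall : ∀ᶠ t : ℝ in 𝓝 0, ‖t • v‖ < ρ / 2 :=
      (Continuous.tendsto (by fun_prop : Continuous fun t : ℝ => ‖t • v‖) 0).eventually_lt_const
        (by simpa using hρ)
    filter_upwards [self_mem_nhdsWithin, nhdsWithin_le_nhds hsmall] with t ht hmem
    have hmax := h.le_add_inner hmem.le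
    have hf := hg X (X + t • v)
    have hT := hT (X + t • v)
    rw [add_sub_cancel_left, inner_smul_right] at hf hT
    rw [norm_smul, mul_pow, Real.norm_eq_abs, sq_abs] at hT
    rw [inner_smul_right] at hmax
    refine le_of_mul_le_mul_left ?_ (ht : 0 < t)
    linear_combination hmax + hf + hT - t * hinner
  have hlim : Tendsto (fun t : ℝ => t * (C * ‖v‖ ^ 2)) (𝓝[>] 0) (𝓝 (0 * (C * ‖v‖ ^ 2))) :=
    (Continuous.tendsto (by fun_prop) 0).mono_left nhdsWithin_le_nhds
  have hv₀ : ‖v‖ ^ 2 ≤ 0 := by simpa using ge_of_tendsto hlim hstep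
  have : v = 0 := by simpa using le_antisymm hv₀ (sq_nonneg _)
  rwa [hv, sub_sub, sub_eq_zero] at this

lemma IsTiltedMax.norm_subgrad_sub_le (hg : ∀ X, IsSubgrad f X (g X)) (hC : 0 ≤ C)
    (hT : ∀ X Z, T Z - T X - ⟪T' X, Z - X⟫ ≤ C * ‖Z - X‖ ^ 2)
    (hρ : 0 < ρ) (hX : ‖X - X₀‖ < ρ / 2) (hY : IsTiltedMax (fun Z => f Z - T Z) X₀ ρ P Y)
    (hXY : ‖X - Y‖ < ρ / 2) : ‖g X - g Y‖ ≤ 8 * C * ‖X - Y‖ := by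
  set τ := ‖X - Y‖ with hτ
  set v := g X - g Y with hv
  rcases (norm_nonneg v).eq_or_lt with hv₀ | hv₀
  · rw [← hv₀]
    positivity
  rcases (norm_nonneg (X - Y)).eq_or_lt with hτ₀ | hτ₀
  · have : X = Y := sub_eq_zero.1 (norm_eq_zero.1 hτ₀.symm)
    simp [hv, hτ, this]
  obtain ⟨ν, hν, hvν⟩ : ∃ ν : H, ‖ν‖ = τ ∧ ⟪v, ν⟫ = τ * ‖v‖ := by
    refine ⟨(τ / ‖v‖) • v, ?_, ?_⟩
    · rw [norm_smul, Real.norm_of_nonneg (by positivity), div_mul_cancel₀ _ hv₀.ne']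
    · rw [inner_smul_right, real_inner_self_eq_norm_sq]
      field_simp
  set Z := X + ν with hZ
  have hZY : Z - Y = ν + (X - Y) := by rw [hZ]; abel
  have hZX₀ : ‖Z - X₀‖ ≤ ρ := by
    rw [show Z - X₀ = (X - X₀) + ν by rw [hZ]; abel]
    linarith [norm_add_le (X - X₀) ν]
  have hfX := hg X Z
  have hfY := hg Y X
  have hmax := hY.2 Z hZX₀
  have hTY := hT Y Z
  have hPY : ⟪P, Z⟫ - ⟪P, Y⟫ = ⟪g Y, Z - Y⟫ - ⟪T' Y, Z - Y⟫ := by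
    rw [← inner_sub_right, hY.subgrad_eq hg (hT Y) hρ, inner_add_left]
    ring
  have hsplit : ⟪g Y, Z - Y⟫ = ⟪g Y, ν⟫ + ⟪g Y, X - Y⟫ := by rw [hZY, inner_add_right]
  have hdist : C * ‖Z - Y‖ ^ 2 ≤ C * (2 * τ) ^ 2 := by
    gcongr
    rw [hZY]
    linarith [norm_add_le ν (X - Y)]
  have hupper : ⟪v, ν⟫ ≤ 4 * C * τ ^ 2 := by
    rw [show Z - X = ν by rw [hZ]; abel] at hfX
    rw [hv, inner_sub_left]
    linarith
  rw [hvν] at hupper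
  refine le_of_mul_le_mul_left ?_ hτ₀
  linarith [mul_nonneg hC (sq_nonneg τ)]

lemma lipschitzOnWith_subgrad_sub_of_isTiltedMax (hg : ∀ X, IsSubgrad f X (g X)) (hC : 0 ≤ C)
    (hT : ∀ X Z, T Z - T X - ⟪T' X, Z - X⟫ ≤ C * ‖Z - X‖ ^ 2)
    (hT' : ∀ X Z, ‖T' X - T' Z‖ ≤ C * ‖X - Z‖) (hρ : 0 < ρ) {σ : ℝ} (hσ : 0 ≤ σ) :
    LipschitzOnWith (9 * C + 4 * σ / ρ).toNNReal (fun X => g X - T' X)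
      {X | ∃ P, ‖P‖ ≤ σ ∧ IsTiltedMax (fun Z => f Z - T Z) X₀ ρ P X} := by
  rintro X ⟨P, hP, hX⟩ Y ⟨Q, hQ, hY⟩
  rw [edist_dist, edist_dist, ← ENNReal.ofReal_coe_nnreal, Real.coe_toNNReal _ (by positivity),
    ← ENNReal.ofReal_mul (by positivity), dist_eq_norm, dist_eq_norm]
  refine ENNReal.ofReal_le_ofReal ?_
  change ‖g X - T' X - (g Y - T' Y)‖ ≤ (9 * C + 4 * σ / ρ) * ‖X - Y‖
  rcases le_or_gt (ρ / 2) ‖X - Y‖ with hfar | hnear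
  · have htilts : 2 * σ ≤ 4 * σ / ρ * ‖X - Y‖ := by
      rw [div_mul_eq_mul_div, le_div_iff₀ hρ]
      nlinarith
    rw [hX.subgrad_eq hg (hT X) hρ, hY.subgrad_eq hg (hT Y) hρ, add_sub_cancel_left,
      add_sub_cancel_left]
    linarith [norm_sub_le P Q, mul_nonneg hC (norm_nonneg (X - Y))]
  · have hslack : 0 ≤ 4 * σ / ρ * ‖X - Y‖ := by positivity
    calc ‖g X - T' X - (g Y - T' Y)‖ = ‖(g X - g Y) - (T' X - T' Y)‖ := by congr 1; abel
      _ ≤ ‖g X - g Y‖ + ‖T' X - T' Y‖ := norm_sub_le _ _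
      _ ≤ 8 * C * ‖X - Y‖ + C * ‖X - Y‖ :=
        add_le_add (hY.norm_subgrad_sub_le hg hC hT hρ hX.1 hnear) (hT' X Y)
      _ ≤ (9 * C + 4 * σ / ρ) * ‖X - Y‖ := by linarith

/-- Jensen's lemma combined with Alexandrov's theorem: the contact points of all small tilts have,
under the map `g - T'` that is Lipschitz on them, an image containing a ball. So they do not form a
null set, and `g` is differentiable at one of them. -/
theorem exists_isTiltedMax_hasHessianAt [FiniteDimensional ℝ H] (hf : Continuous f)
    (hg : ∀ X, IsSubgrad f X (g X)) (hC : 0 ≤ C) (hTc : Continuous T)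
    (hT : ∀ X Z, T Z - T X - ⟪T' X, Z - X⟫ ≤ C * ‖Z - X‖ ^ 2)
    (hT' : ∀ X Z, ‖T' X - T' Z‖ ≤ C * ‖X - Z‖) {γ μ : ℝ} (hρ : 0 < ρ) (hγ : 0 < γ) (hμ : 0 < μ)
    (hgap : ∀ X, ρ / 2 ≤ ‖X - X₀‖ → ‖X - X₀‖ ≤ ρ → f X - T X ≤ f X₀ - T X₀ - γ) :
    ∃ X P, ∃ A : H →L[ℝ] H, ‖P‖ ≤ μ ∧ IsTiltedMax (fun Z => f Z - T Z) X₀ ρ P X ∧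
      IsSubgrad f X (T' X + P) ∧ HasHessianAt f (T' X + P) A X := by
  let _ : MeasurableSpace H := borel H
  have _ : BorelSpace H := ⟨rfl⟩
  set m : Measure H := μH[Module.finrank ℝ H] with hm
  set σ := min μ (γ / ρ)
  have hσ₀ : 0 < σ := by positivity
  set K : Set H := {X | ∃ P, ‖P‖ ≤ σ ∧ IsTiltedMax (fun Z => f Z - T Z) X₀ ρ P X}
  have hcover : ball (0 : H) σ ⊆ (fun X => g X - T' X) '' K := fun P hP => by
    rw [mem_ball_zero_iff] at hP
    obtain ⟨X, hX⟩ := exists_isTiltedMax (P := P) (hf.sub hTc) hρ hgap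
      ((lt_div_iff₀ hρ).1 (hP.trans_le (min_le_right _ _)))
    exact ⟨X, ⟨P, hP.le, hX⟩, by simp [hX.subgrad_eq hg (hT X) hρ]⟩
  obtain ⟨X, ⟨P, hP, hX⟩, hd⟩ : ∃ X ∈ K, DifferentiableAt ℝ g X := by
    by_contra! hnot
    have hK : m K = 0 :=
      measure_mono_null hnot (hausdorffMeasure_not_differentiableAt_subgrad hf hg)
    have himage := (lipschitzOnWith_subgrad_sub_of_isTiltedMax (X₀ := X₀) hg hC hT hT' hρ
      hσ₀.le).hausdorffMeasure_image_le (d := (Module.finrank ℝ H : ℝ)) (by positivity)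
    rw [← hm, hK, mul_zero] at himage
    exact absurd ((measure_mono hcover).trans himage) (not_le.2 (measure_ball_pos m 0 hσ₀))
  have hslope : g X = T' X + P := hX.subgrad_eq hg (hT X) hρ
  exact ⟨X, P, fderiv ℝ g X, hP.trans (min_le_left _ _), hX, hslope ▸ hg X,
    hslope ▸ hasHessianAt_of_hasFDerivAt_subgrad hg hd.hasFDerivAt⟩

end JensenAlexandrov

/-! ### Quadratic forms and uniformly elliptic operators -/

lemma isHermitian_smul_one {n : Type*} [DecidableEq n] (c : ℝ) :
    (c • (1 : Matrix n n ℝ)).IsHermitian :=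
  Matrix.isHermitian_one.smul (.all c)

section QuadForm

variable {n : Type*} [Fintype n] [DecidableEq n] {M : Matrix n n ℝ}

/-- The quadratic form `x ↦ ⟪M x, x⟫` of a square matrix. -/
def quadForm (M : Matrix n n ℝ) (x : EuclideanSpace ℝ n) : ℝ :=
  ⟪Matrix.toEuclideanCLM (𝕜 := ℝ) M x, x⟫

lemma quadForm_add (M N : Matrix n n ℝ) (x : EuclideanSpace ℝ n) :
    quadForm (M + N) x = quadForm M x + quadForm N x := by
  simp [quadForm, inner_add_left]

lemma quadForm_sub (M N : Matrix n n ℝ) (x : EuclideanSpace ℝ n) :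
    quadForm (M - N) x = quadForm M x - quadForm N x := by
  simp [quadForm, inner_sub_left]

lemma quadForm_smul (c : ℝ) (M : Matrix n n ℝ) (x : EuclideanSpace ℝ n) :
    quadForm (c • M) x = c * quadForm M x := by
  simp [quadForm, inner_smul_left]

lemma quadForm_smul_one (c : ℝ) (x : EuclideanSpace ℝ n) :
    quadForm (c • (1 : Matrix n n ℝ)) x = c * ‖x‖ ^ 2 := by
  simp [quadForm, inner_smul_left]

lemma quadForm_apply_zero (M : Matrix n n ℝ) : quadForm M 0 = 0 := by simp [quadForm]

lemma quadForm_apply_smul (M : Matrix n n ℝ) (c : ℝ) (x : EuclideanSpace ℝ n) :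
    quadForm M (c • x) = c ^ 2 * quadForm M x := by
  simp only [quadForm, map_smul, real_inner_smul_left, real_inner_smul_right]
  ring

lemma abs_quadForm_le (M : Matrix n n ℝ) (x : EuclideanSpace ℝ n) :
    |quadForm M x| ≤ matOpNorm M * ‖x‖ ^ 2 :=
  calc |quadForm M x| ≤ ‖Matrix.toEuclideanCLM (𝕜 := ℝ) M x‖ * ‖x‖ := abs_real_inner_le_norm _ _
    _ ≤ matOpNorm M * ‖x‖ * ‖x‖ := by gcongr; exact ContinuousLinearMap.le_opNorm _ _
    _ = matOpNorm M * ‖x‖ ^ 2 := by ring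

lemma inner_toEuclideanCLM_comm (hM : M.IsHermitian) (x y : EuclideanSpace ℝ n) :
    ⟪Matrix.toEuclideanCLM (𝕜 := ℝ) M x, y⟫ = ⟪Matrix.toEuclideanCLM (𝕜 := ℝ) M y, x⟫ :=
  ((Matrix.isSymmetric_toEuclideanLin_iff.2 hM) x y).trans (real_inner_comm _ _)

lemma quadForm_apply_add (hM : M.IsHermitian) (x y : EuclideanSpace ℝ n) :
    quadForm M (x + y)
      = quadForm M x + 2 * ⟪Matrix.toEuclideanCLM (𝕜 := ℝ) M x, y⟫ + quadForm M y := by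
  simp only [quadForm, map_add, inner_add_left, inner_add_right]
  rw [inner_toEuclideanCLM_comm hM y x]
  ring

lemma posSemidef_of_forall_quadForm_nonneg (hM : M.IsHermitian) (h : ∀ x, 0 ≤ quadForm M x) :
    M.PosSemidef :=
  Matrix.isPositive_toEuclideanLin_iff.1 ⟨Matrix.isSymmetric_toEuclideanLin_iff.2 hM, h⟩

lemma matOpNorm_nonneg (M : Matrix n n ℝ) : 0 ≤ matOpNorm M := norm_nonneg _

lemma matOpNorm_add_le (M N : Matrix n n ℝ) : matOpNorm (M + N) ≤ matOpNorm M + matOpNorm N := by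
  simpa only [matOpNorm, map_add] using norm_add_le _ _

lemma matOpNorm_smul (c : ℝ) (M : Matrix n n ℝ) : matOpNorm (c • M) = |c| * matOpNorm M := by
  rw [matOpNorm, map_smul, norm_smul, Real.norm_eq_abs, matOpNorm]

lemma matOpNorm_smul_one_le {c : ℝ} (hc : 0 ≤ c) : matOpNorm (c • (1 : Matrix n n ℝ)) ≤ c := by
  rw [matOpNorm_smul, abs_of_nonneg hc, matOpNorm, map_one]
  exact mul_le_of_le_one_right hc ContinuousLinearMap.norm_id_le

end QuadForm

section Elliptic

variable {d : ℕ} {lam Lam : ℝ} {F : Mat d → ℝ} {M : Mat d}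

lemma UniformlyElliptic.mono (hF : UniformlyElliptic lam Lam F) (hlam : 0 ≤ lam) {N : Mat d}
    (hM : M.IsHermitian) (hN : N.PosSemidef) : F M ≤ F (M + N) := by
  linarith [(hF.2 M N hM hN).1, mul_nonneg hlam (matOpNorm_nonneg N)]

lemma UniformlyElliptic.add_smul_one_le (hF : UniformlyElliptic lam Lam F) (hLam : 0 ≤ Lam)
    (hM : M.IsHermitian) {c : ℝ} (hc : 0 ≤ c) : F (M + c • 1) ≤ F M + Lam * c := by
  have hup := (hF.2 M (c • 1) hM (Matrix.PosSemidef.one.smul hc)).2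
  linarith [mul_le_mul_of_nonneg_left (matOpNorm_smul_one_le (n := Fin d) hc) hLam]

lemma UniformlyElliptic.abs_le (hF : UniformlyElliptic lam Lam F) (hlam : 0 ≤ lam)
    (hLam : 0 ≤ Lam) (hM : M.IsHermitian) : |F M| ≤ 2 * Lam * matOpNorm M := by
  set k := matOpNorm M
  have hk : 0 ≤ k := matOpNorm_nonneg M
  have hpos : (M + k • 1).PosSemidef :=
    posSemidef_of_forall_quadForm_nonneg (hM.add (isHermitian_smul_one k)) fun x => by
      rw [quadForm_add, quadForm_smul_one]
      linarith [neg_le_of_abs_le (abs_quadForm_le M x)]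
  have hnorm : matOpNorm (M + k • 1) ≤ 2 * k :=
    (matOpNorm_add_le _ _).trans (by linarith [matOpNorm_smul_one_le (n := Fin d) hk])
  have h₀ := hF.2 0 (M + k • 1) Matrix.isHermitian_zero hpos
  rw [zero_add, hF.1, sub_zero] at h₀
  have hlow := hF.add_smul_one_le hLam hM hk
  have hmono := hF.mono hlam hM (Matrix.PosSemidef.one.smul hk)
  have hprod := mul_le_mul_of_nonneg_left hnorm hLam
  have hnn := mul_nonneg hlam (matOpNorm_nonneg (M + k • 1))
  exact _root_.abs_le.2 ⟨by nlinarith, by linarith⟩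

lemma UniformlyElliptic.neg_comp_neg (hF : UniformlyElliptic lam Lam F) :
    UniformlyElliptic lam Lam fun M => -F (-M) := by
  refine ⟨by simp [hF.1], fun M N hM hN => ?_⟩
  have h := hF.2 (-(M + N)) N (hM.add hN.1).neg hN
  rw [show -(M + N) + N = -M by abel] at h
  constructor <;> linarith [h.1, h.2]

end Elliptic

/-! ### Quadratic test functions -/

section Taylor

variable {E G : Type*} [NormedAddCommGroup E] [NormedSpace ℝ E]
  [NormedAddCommGroup G] [NormedSpace ℝ G] {x : E}

lemma isLittleO_sub_of_hasFDerivAt_isLittleO {g : E → G} {g' : E → E →L[ℝ] G}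
    (hg : ∀ᶠ y in 𝓝 x, HasFDerivAt g (g' y) y) (hg' : g' =o[𝓝 x] fun y => y - x) :
    (fun y => g y - g x) =o[𝓝 x] fun y => ‖y - x‖ ^ 2 := by
  refine isLittleO_iff.2 fun μ hμ => ?_
  obtain ⟨r, hr, hball⟩ := Metric.eventually_nhds_iff_ball.1 (hg.and (hg'.def hμ))
  filter_upwards [ball_mem_nhds x hr] with y hy
  have hsub : closedBall x ‖y - x‖ ⊆ ball x r :=
    closedBall_subset_ball (by rwa [← dist_eq_norm])
  have hmean := (convex_closedBall x ‖y - x‖).norm_image_sub_le_of_norm_hasFDerivWithin_le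
    (C := μ * ‖y - x‖) (x := x) (y := y)
    (fun z hz => (hball z (hsub hz)).1.hasFDerivWithinAt)
    (fun z hz => (hball z (hsub hz)).2.trans
      (mul_le_mul_of_nonneg_left (mem_closedBall_iff_norm.1 hz) hμ.le))
    (mem_closedBall_self (norm_nonneg _)) (mem_closedBall_iff_norm.2 le_rfl)
  rw [norm_pow, norm_norm]
  linarith

lemma isLittleO_taylor_two {φ : E → G} (hφ : ContDiffAt ℝ 2 φ x) :
    (fun y => φ y - φ x - fderiv ℝ φ x (y - x)
      - (2⁻¹ : ℝ) • fderiv ℝ (fderiv ℝ φ) x (y - x) (y - x)) =o[𝓝 x] fun y => ‖y - x‖ ^ 2 := by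
  set D := fderiv ℝ (fderiv ℝ φ) x
  have hsymm (v w : E) : D v w = D w v := hφ.isSymmSndFDerivAt (by simp) v w
  have hDφ : HasFDerivAt (fderiv ℝ φ) D x :=
    ((hφ.fderiv_right (m := 1) le_rfl).differentiableAt one_ne_zero).hasFDerivAt
  have hdiff : ∀ᶠ y in 𝓝 x, DifferentiableAt ℝ φ y :=
    (hφ.eventually (by simp)).mono fun y hy => hy.differentiableAt two_ne_zero
  have hrem : ∀ᶠ y in 𝓝 x, HasFDerivAt
      (fun y => φ y - fderiv ℝ φ x (y - x) - (2⁻¹ : ℝ) • D (y - x) (y - x))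
      (fderiv ℝ φ y - fderiv ℝ φ x - D (y - x)) y := by
    filter_upwards [hdiff] with y hy
    have hid : HasFDerivAt (fun z : E => z - x) (.id ℝ E) y := (hasFDerivAt_id y).sub_const x
    refine ((hy.hasFDerivAt.sub ((fderiv ℝ φ x).hasFDerivAt.comp y hid)).sub
      (((D.hasFDerivAt.comp y hid).clm_apply hid).const_smul (2⁻¹ : ℝ))).congr_fderiv ?_
    ext v
    have hhalf : (2⁻¹ : ℝ) • (D (y - x) v + D v (y - x)) = D (y - x) v := by
      rw [hsymm v, ← two_smul ℝ, inv_smul_smul₀ two_ne_zero]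
    change fderiv ℝ φ y v - fderiv ℝ φ x v - (2⁻¹ : ℝ) • (D (y - x) v + D v (y - x))
      = fderiv ℝ φ y v - fderiv ℝ φ x v - D (y - x) v
    rw [hhalf]
  have h := isLittleO_sub_of_hasFDerivAt_isLittleO hrem (hasFDerivAt_iff_isLittleO.1 hDφ)
  refine h.congr_left fun y => ?_
  simp only [sub_self, map_zero, smul_zero, sub_zero]
  abel

end Taylor

section HessM

variable {d : ℕ} {φ : Euc d → ℝ} {x : Euc d}

lemma hessM_apply (φ : Euc d → ℝ) (x : Euc d) (i j : Fin d) :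
    hessM φ x i j
      = fderiv ℝ (fderiv ℝ φ) x (EuclideanSpace.single i 1) (EuclideanSpace.single j 1) := by
  simp [hessM, iteratedFDeriv_two_apply]

lemma isHermitian_hessM (hφ : ContDiffAt ℝ 2 φ x) : (hessM φ x).IsHermitian := by
  ext i j
  simp [hessM_apply, (hφ.isSymmSndFDerivAt (by simp)).eq (EuclideanSpace.single i 1)]

lemma quadForm_hessM (φ : Euc d → ℝ) (x v : Euc d) :
    quadForm (hessM φ x) v = fderiv ℝ (fderiv ℝ φ) x v v := by
  have hv : v = ∑ i, v i • EuclideanSpace.single i (1 : ℝ) := by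
    simpa using ((EuclideanSpace.basisFun (Fin d) ℝ).sum_repr v).symm
  have hbilin (D : Euc d →L[ℝ] Euc d →L[ℝ] ℝ) : D v v
      = ∑ i, v i * ∑ j, D (EuclideanSpace.single i 1) (EuclideanSpace.single j 1) * v j := by
    conv_lhs => rw [hv]
    simp only [map_sum, map_smul, sum_apply, smul_apply, smul_eq_mul, Finset.mul_sum]
    rw [Finset.sum_comm]
    exact Finset.sum_congr rfl fun i _ => Finset.sum_congr rfl fun j _ => by ring
  rw [hbilin, quadForm, real_inner_comm, Matrix.inner_toEuclideanCLM]
  simp only [dotProduct, Matrix.mulVec, hessM_apply]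

lemma hasHessianAt_hessM (hφ : ContDiffAt ℝ 2 φ x) :
    HasHessianAt φ (gradient φ x) (Matrix.toEuclideanCLM (𝕜 := ℝ) (hessM φ x)) x := by
  have h := (isLittleO_taylor_two hφ).comp_tendsto
    (show Tendsto (fun h : Euc d => x + h) (𝓝 0) (𝓝 x) by
      simpa using (tendsto_const_nhds (x := x)).add (tendsto_id (x := 𝓝 (0 : Euc d))))
  refine (h.congr (fun v => ?_) fun v => ?_)
  · change _ = φ (x + v) - φ x - ⟪gradient φ x, v⟫ - quadForm (hessM φ x) v / 2
    simp only [Function.comp_apply, add_sub_cancel_left, quadForm_hessM, gradient,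
      InnerProductSpace.toDual_symm_apply, smul_eq_mul, div_eq_inv_mul]
  · simp

lemma HasHessianAt.eventually_le {H : Type*} [NormedAddCommGroup H] [InnerProductSpace ℝ H]
    {f : H → ℝ} {p x : H} {A : H →L[ℝ] H} (h : HasHessianAt f p A x) {μ : ℝ} (hμ : 0 < μ) :
    ∀ᶠ y in 𝓝 x,
      f y ≤ f x + ⟪p, y - x⟫ + ⟪A (y - x), y - x⟫ / 2 + μ * ‖y - x‖ ^ 2 := by
  have htend : Tendsto (fun y => y - x) (𝓝 x) (𝓝 0) := tendsto_sub_nhds_zero_iff.2 tendsto_id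
  filter_upwards [htend.eventually (h.def hμ)] with y hy
  rw [add_sub_cancel, norm_pow, norm_norm] at hy
  linarith [le_of_abs_le hy]

lemma hessM_fun_neg (φ : Euc d → ℝ) (x : Euc d) : hessM (fun y => -φ y) x = -hessM φ x := by
  ext i j
  have hneg : fderiv ℝ (fun y => -φ y) = fun y => -fderiv ℝ φ y := funext fun _ => fderiv_fun_neg
  simp only [hessM_apply, hneg, fderiv_fun_neg, Matrix.neg_apply, neg_apply]

lemma gradient_fun_neg (φ : Euc d → ℝ) (x : Euc d) :
    gradient (fun y => -φ y) x = -gradient φ x := by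
  simp only [gradient, fderiv_fun_neg, map_neg]

end HessM

section QuadPoly

variable {d : ℕ} {M : Mat d}

/-- The quadratic polynomial that vanishes at `x` with gradient `p` and Hessian `M`, as a function
of `y`. -/
def quadPoly (x p : Euc d) (M : Mat d) (y : Euc d) : ℝ := ⟪p, y - x⟫ + quadForm M (y - x) / 2

lemma quadPoly_self (x p : Euc d) (M : Mat d) : quadPoly x p M x = 0 := by
  simp [quadPoly, quadForm_apply_zero]

lemma contDiff_quadPoly (x p : Euc d) (M : Mat d) : ContDiff ℝ 2 (quadPoly x p M) := by
  have hsub : ContDiff ℝ 2 fun y : Euc d => y - x := contDiff_id.sub contDiff_const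
  exact (contDiff_const.inner ℝ hsub).add
    ((((Matrix.toEuclideanCLM (𝕜 := ℝ) M).contDiff.comp hsub).inner ℝ hsub).div_const 2)

lemma quadPoly_eq_add_quadPoly (hM : M.IsHermitian) (x p y z : Euc d) :
    quadPoly x p M z = quadPoly x p M y
      + quadPoly y (p + Matrix.toEuclideanCLM (𝕜 := ℝ) M (y - x)) M z := by
  simp only [quadPoly]
  rw [show z - x = (y - x) + (z - y) by abel, quadForm_apply_add hM, inner_add_right,
    inner_add_left]
  ring

lemma hasGradientAt_quadPoly (hM : M.IsHermitian) (x p y : Euc d) :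
    HasGradientAt (quadPoly x p M) (p + Matrix.toEuclideanCLM (𝕜 := ℝ) M (y - x)) y := by
  have hquad : HasFDerivAt (quadForm M)
      (2 • innerSL ℝ (Matrix.toEuclideanCLM (𝕜 := ℝ) M (y - x))) (y - x) :=
    (LinearMap.IsSymmetric.hasStrictFDerivAt_reApplyInnerSelf
      (Matrix.isSymmetric_toEuclideanLin_iff.2 hM) (y - x)).hasFDerivAt
  have hid : HasFDerivAt (fun z : Euc d => z - x) (.id ℝ (Euc d)) y :=
    (hasFDerivAt_id y).sub_const x
  rw [hasGradientAt_iff_hasFDerivAt]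
  refine (((innerSL ℝ p).hasFDerivAt.add (hquad.mul_const 2⁻¹)).comp y hid).congr_fderiv ?_
  ext v
  simp

lemma hessM_quadPoly (hM : M.IsHermitian) (x p y : Euc d) : hessM (quadPoly x p M) y = M := by
  have hgrad : fderiv ℝ (quadPoly x p M)
      = fun y => innerSL ℝ (p + Matrix.toEuclideanCLM (𝕜 := ℝ) M (y - x)) :=
    funext fun z => (hasGradientAt_quadPoly hM x p z).hasFDerivAt.fderiv
  have hid : HasFDerivAt (fun z : Euc d => z - x) (.id ℝ (Euc d)) y :=
    (hasFDerivAt_id y).sub_const x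
  have hhess : HasFDerivAt (fun y => innerSL ℝ (p + Matrix.toEuclideanCLM (𝕜 := ℝ) M (y - x)))
      ((innerSL ℝ).comp (Matrix.toEuclideanCLM (𝕜 := ℝ) M)) y :=
    (innerSL ℝ (E := Euc d)).hasFDerivAt.comp y
      (((Matrix.toEuclideanCLM (𝕜 := ℝ) M).hasFDerivAt.comp y hid).const_add p)
  ext i j
  rw [hessM_apply, hgrad, hhess.fderiv, ContinuousLinearMap.comp_apply, innerSL_apply_apply,
    inner_toEuclideanCLM_comm hM, real_inner_comm, Matrix.inner_toEuclideanCLM]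
  simp

end QuadPoly

section TouchedAbove

variable {d : ℕ} {F G : Mat d → ℝ} {u : Euc d → ℝ} {x p : Euc d} {M : Mat d}

/-- The function `u` is touched from above at `x` by the quadratic polynomial with gradient `p`
and Hessian `M`, that is, `(p, M)` belongs to the second-order superjet of `u` at `x` without an
error term. -/
def TouchedAbove (u : Euc d → ℝ) (x p : Euc d) (M : Mat d) : Prop :=
  ∀ᶠ y in 𝓝 x, u y ≤ u x + quadPoly x p M y

/-- Subsolutions of `G (D²u) = 0` on `s`, tested with quadratic polynomials only. -/
def QuadSubSol (G : Mat d → ℝ) (u : Euc d → ℝ) (s : Set (Euc d)) : Prop :=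
  ∀ x ∈ s, ∀ p M, M.IsHermitian → TouchedAbove u x p M → 0 ≤ G M

lemma ViscSubSol.le_of_touchedAbove {θ f : Euc d → ℝ} {q : Euc d} (hu : ViscSubSol F θ f q u)
    (hx : x ∈ ball (0 : Euc d) 1) (hM : M.IsHermitian) (h : TouchedAbove u x p M)
    (hq : q + p ≠ 0) : f x ≤ ‖q + p‖ ^ θ x * F M := by
  have hgrad : gradient (quadPoly x p M) x = p := by
    simpa using (hasGradientAt_quadPoly hM x p x).gradient
  have hmax : IsLocalMax (fun y => u y - quadPoly x p M y) x := by
    filter_upwards [h] with y hy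
    rw [quadPoly_self]
    linarith
  have := hu x hx (quadPoly x p M) (contDiff_quadPoly x p M).contDiffAt hmax (by rwa [hgrad])
  rwa [hgrad, hessM_quadPoly hM] at this

lemma ViscSuperSol.viscSubSol_neg {θ f : Euc d → ℝ} {q : Euc d} (hu : ViscSuperSol F θ f q u) :
    ViscSubSol (fun M => -F (-M)) θ (fun x => -f x) (-q) (fun x => -u x) := by
  intro x hx φ hφ hmax hq
  have hgrad : -q + gradient φ x = -(q + gradient (fun y => -φ y) x) := by
    rw [gradient_fun_neg]
    abel
  have h := hu x hx (fun y => -φ y) hφ.neg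
    (hmax.mono fun y (hy : -u y - φ y ≤ -u x - φ x) => by linarith)
    (by rwa [hgrad, neg_ne_zero] at hq)
  rw [hgrad, norm_neg]
  rw [hessM_fun_neg] at h
  linarith

/-- A `C²` test function is replaced by its Taylor polynomial with a slightly larger Hessian. -/
lemma QuadSubSol.viscSubSolPure {lam Lam : ℝ} (hLam : 0 < Lam) (hG : UniformlyElliptic lam Lam G)
    {s : Set (Euc d)} (h : QuadSubSol G u s) : ViscSubSolPure G (fun _ => 0) u s := by
  intro x hx φ hφ hmax
  have hH := isHermitian_hessM hφ
  refine le_of_forall_pos_le_add fun ε hε => ?_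
  obtain ⟨μ, hμ, hμε⟩ : ∃ μ > 0, Lam * (2 * μ) = ε :=
    ⟨ε / (2 * Lam), by positivity, by field_simp⟩
  have htouch : TouchedAbove u x (gradient φ x) (hessM φ x + (2 * μ) • 1) := by
    filter_upwards [(hasHessianAt_hessM hφ).eventually_le hμ, hmax] with y hy hmax
    rw [quadPoly, quadForm_add, quadForm_smul_one, quadForm]
    linarith
  have hpos := h x hx _ _ (hH.add (isHermitian_smul_one _)) htouch
  have hle := hG.add_smul_one_le hLam.le hH (c := 2 * μ) (by positivity)
  linarith

lemma QuadSubSol.viscSuperSolPure {lam Lam : ℝ} (hLam : 0 < Lam)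
    (hG : UniformlyElliptic lam Lam G) {s : Set (Euc d)}
    (h : QuadSubSol (fun M => -G (-M)) (fun x => -u x) s) :
    ViscSuperSolPure G (fun _ => 0) u s := by
  intro x hx φ hφ hmin
  have hneg := h.viscSubSolPure hLam hG.neg_comp_neg x hx (fun y => -φ y) hφ.neg
    (hmin.mono fun y (hy : u x - φ x ≤ u y - φ y) => by linarith)
  rw [hessM_fun_neg, neg_neg] at hneg
  linarith

end TouchedAbove

/-! ### Sup-convolutions -/

section SupConv

variable {E F : Type*} [NormedAddCommGroup E] [InnerProductSpace ℝ E] [NormedAddCommGroup F]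
  [InnerProductSpace ℝ F] {B : Set E} {u f : E → ℝ} {Y : E → E} {c : ℝ} {x h : E}

/-- `f` is the sup-convolution `x ↦ sup_{y ∈ B} (u y - c / 2 * ‖x - y‖ ^ 2)` shifted by
`c / 2 * ‖x‖ ^ 2`, which makes it convex, and `Y` selects points where the supremum is attained. -/
structure IsSupConv (B : Set E) (u : E → ℝ) (c : ℝ) (f : E → ℝ) (Y : E → E) : Prop where
  mem : ∀ x, Y x ∈ B
  apply_eq : ∀ x, f x = u (Y x) - c / 2 * ‖Y x‖ ^ 2 + c * ⟪x, Y x⟫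
  le_apply : ∀ x, ∀ y ∈ B, u y - c / 2 * ‖y‖ ^ 2 + c * ⟪x, y⟫ ≤ f x

lemma exists_isSupConv (hB : IsCompact B) (hne : B.Nonempty) (hu : ContinuousOn u B) (c : ℝ) :
    ∃ f Y, IsSupConv B u c f Y := by
  have hmax (x : E) : ∃ y ∈ B, ∀ z ∈ B, u z - c / 2 * ‖z‖ ^ 2 + c * ⟪x, z⟫
      ≤ u y - c / 2 * ‖y‖ ^ 2 + c * ⟪x, y⟫ := by
    simpa only [isMaxOn_iff] using hB.exists_isMaxOn hne
      (f := fun z => u z - c / 2 * ‖z‖ ^ 2 + c * ⟪x, z⟫) (by fun_prop)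
  choose Y hYB hY using hmax
  exact ⟨_, Y, hYB, fun x => rfl, hY⟩

lemma inner_eq_inner_fst_add_inner_snd (X Z : WithLp 2 (E × F)) :
    ⟪X, Z⟫ = ⟪X.fst, Z.fst⟫ + ⟪X.snd, Z.snd⟫ :=
  WithLp.prod_inner_apply X Z

namespace IsSupConv

lemma isSubgrad (hf : IsSupConv B u c f Y) (x : E) : IsSubgrad f x (c • Y x) := by
  intro z
  have := hf.le_apply z (Y x) (hf.mem x)
  rw [hf.apply_eq x, real_inner_smul_left, inner_sub_right, real_inner_comm z, real_inner_comm x]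
  linarith

lemma continuous (hf : IsSupConv B u c f Y) (hB : Bornology.IsBounded B) : Continuous f := by
  obtain ⟨R, hR⟩ := hB.exists_norm_le
  refine (LipschitzWith.of_le_add_mul (|c| * R).toNNReal fun x z => ?_).continuous
  have hsubgrad := hf.isSubgrad x z
  have hinner : ⟪c • Y x, x - z⟫ ≤ |c| * R * ‖x - z‖ := by
    refine (real_inner_le_norm _ _).trans ?_
    rw [norm_smul, Real.norm_eq_abs]
    gcongr
    exact hR _ (hf.mem x)
  have hR₀ : 0 ≤ R := (norm_nonneg _).trans (hR _ (hf.mem x))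
  rw [← neg_sub x z, inner_neg_right] at hsubgrad
  rw [Real.coe_toNNReal _ (by positivity), dist_eq_norm]
  linarith

lemma sub_eq (hf : IsSupConv B u c f Y) (x : E) :
    f x - c / 2 * ‖x‖ ^ 2 = u (Y x) - c / 2 * ‖x - Y x‖ ^ 2 := by
  rw [hf.apply_eq, norm_sub_sq_real]
  ring

lemma le_sub (hf : IsSupConv B u c f Y) (hx : x ∈ B) : u x ≤ f x - c / 2 * ‖x‖ ^ 2 := by
  have := hf.le_apply x x hx
  rw [real_inner_self_eq_norm_sq] at this
  linarith

lemma sub_le_sub (hf : IsSupConv B u c f Y) (hx : Y x + h ∈ B) :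
    u (Y x + h) - u (Y x) ≤ f (x + h) - f x - c * ⟪x, h⟫ - c / 2 * ‖h‖ ^ 2 := by
  have := hf.le_apply (x + h) _ hx
  rw [norm_add_sq_real, inner_add_left, inner_add_right, inner_add_right, real_inner_comm (Y x) h,
    real_inner_self_eq_norm_sq] at this
  rw [hf.apply_eq x]
  linarith

lemma prod {B' : Set F} {v g : F → ℝ} {Z : F → F} (hf : IsSupConv B u c f Y)
    (hg : IsSupConv B' v c g Z) :
    IsSupConv {X : WithLp 2 (E × F) | X.fst ∈ B ∧ X.snd ∈ B'} (fun X => u X.fst + v X.snd) c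
      (fun X => f X.fst + g X.snd) (fun X => WithLp.toLp 2 (Y X.fst, Z X.snd)) where
  mem X := ⟨hf.mem _, hg.mem _⟩
  apply_eq X := by
    rw [hf.apply_eq, hg.apply_eq, WithLp.prod_norm_sq_eq_of_L2, inner_eq_inner_fst_add_inner_snd]
    dsimp only [WithLp.toLp_fst, WithLp.toLp_snd]
    ring
  le_apply X W hW := by
    have hfst := hf.le_apply X.fst _ hW.1
    have hsnd := hg.le_apply X.snd _ hW.2
    rw [WithLp.prod_norm_sq_eq_of_L2, inner_eq_inner_fst_add_inner_snd]
    linarith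

end IsSupConv

lemma exists_forall_isSupConv_close (hB : IsCompact B) (hu : ContinuousOn u B) {δ γ : ℝ}
    (hδ : 0 < δ) (hγ : 0 < γ) :
    ∃ c > 0, ∀ f Y, IsSupConv B u c f Y →
      ∀ x ∈ B, ‖x - Y x‖ < δ ∧ f x - c / 2 * ‖x‖ ^ 2 ≤ u x + γ := by
  obtain ⟨K, hK⟩ := hB.exists_bound_of_continuousOn hu
  obtain ⟨δ', hδ', hunif⟩ := Metric.uniformContinuousOn_iff.1
    (hB.uniformContinuousOn_of_continuous hu) γ hγ
  set r := min δ δ'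
  have hr : 0 < r := by positivity
  refine ⟨4 * (|K| + 1) / r ^ 2, by positivity, fun f Y hf x hx => ?_⟩
  have hlower := (hf.le_sub hx).trans_eq (hf.sub_eq x)
  have hclose : ‖x - Y x‖ < r := by
    have hx' := abs_le.1 (hK x hx)
    have hY' := abs_le.1 (hK _ (hf.mem x))
    have : 2 * (|K| + 1) * ‖x - Y x‖ ^ 2 < 2 * (|K| + 1) * r ^ 2 := by
      rw [← div_lt_iff₀ (by positivity)]
      calc _ = 4 * (|K| + 1) / r ^ 2 / 2 * ‖x - Y x‖ ^ 2 := by ring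
        _ < _ := by linarith [le_abs_self K]
    exact lt_of_pow_lt_pow_left₀ 2 hr.le (lt_of_mul_lt_mul_left this (by positivity))
  refine ⟨hclose.trans_le (min_le_left _ _), ?_⟩
  have hdist : dist (Y x) x < δ' := by
    rw [dist_comm, dist_eq_norm]
    exact hclose.trans_le (min_le_right _ _)
  have hu' := (abs_lt.1 (hunif _ (hf.mem x) x hx hdist)).2
  have hpos : 0 ≤ 4 * (|K| + 1) / r ^ 2 / 2 * ‖x - Y x‖ ^ 2 := by positivity
  rw [hf.sub_eq]
  linarith

end SupConv

/-! ### The theorem on sums -/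

section Quadratic

variable {H : Type*} [NormedAddCommGroup H] [InnerProductSpace ℝ H] {S : H →L[ℝ] H}

lemma inner_add_half_inner_apply_add (hS : (S : H →ₗ[ℝ] H).IsSymmetric) (b X h : H) :
    ⟪b, X + h⟫ + ⟪S (X + h), X + h⟫ / 2
      = ⟪b, X⟫ + ⟪S X, X⟫ / 2 + ⟪b + S X, h⟫ + ⟪S h, h⟫ / 2 := by
  have : ⟪S h, X⟫ = ⟪S X, h⟫ := (hS h X).trans (real_inner_comm _ _)
  rw [map_add, inner_add_left, inner_add_left, inner_add_right, inner_add_right, inner_add_right,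
    this]
  ring

lemma inner_apply_self_le (S : H →L[ℝ] H) (h : H) : ⟪S h, h⟫ ≤ ‖S‖ * ‖h‖ ^ 2 := by
  refine (real_inner_le_norm _ _).trans ?_
  rw [pow_two, ← mul_assoc]
  gcongr
  exact S.le_opNorm h

lemma nonpos_of_eventually_le_of_isLittleO {Q r : H → ℝ}
    (hQ : ∀ (t : ℝ) h, Q (t • h) = t ^ 2 * Q h) (hr : r =o[𝓝 0] fun h => ‖h‖ ^ 2)
    (hle : ∀ᶠ h in 𝓝 0, Q h ≤ r h) (h : H) : Q h ≤ 0 := by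
  have hray : Tendsto (fun t : ℝ => t • h) (𝓝[≠] 0) (𝓝 0) := by
    have : Tendsto (fun t : ℝ => t • h) (𝓝 0) (𝓝 ((0 : ℝ) • h)) :=
      Continuous.tendsto (by fun_prop) 0
    exact (zero_smul ℝ h ▸ this).mono_left nhdsWithin_le_nhds
  have hsq : (fun t : ℝ => ‖t • h‖ ^ 2) =O[𝓝[≠] 0] fun t => t ^ 2 :=
    .of_bound (‖h‖ ^ 2) (.of_forall fun t => by simp [norm_smul, mul_pow, mul_comm])
  refine ge_of_tendsto ((hr.comp_tendsto hray).trans_isBigO hsq).tendsto_div_nhds_zero ?_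
  filter_upwards [hray.eventually hle, self_mem_nhdsWithin] with t ht ht₀
  rw [Function.comp, le_div_iff₀ (sq_pos_of_ne_zero ht₀), mul_comm, ← hQ]
  exact ht

lemma exists_hasHessianAt_of_quadratic_gap [FiniteDimensional ℝ H] {f : H → ℝ} {g : H → H}
    (hf : Continuous f) (hg : ∀ X, IsSubgrad f X (g X)) (hS : (S : H →ₗ[ℝ] H).IsSymmetric)
    (b : H) {X₀ : H} {ρ γ μ : ℝ} (hρ : 0 < ρ) (hγ : 0 < γ) (hμ : 0 < μ)
    (hgap : ∀ X, ρ / 2 ≤ ‖X - X₀‖ → ‖X - X₀‖ ≤ ρ → f X - (⟪b, X⟫ + ⟪S X, X⟫ / 2)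
      ≤ f X₀ - (⟪b, X₀⟫ + ⟪S X₀, X₀⟫ / 2) - γ) :
    ∃ X P A, ‖X - X₀‖ < ρ / 2 ∧ ‖P‖ ≤ μ ∧ HasHessianAt f (b + S X + P) A X ∧
      ∀ᶠ h in 𝓝 0, f (X + h) ≤ f X + ⟪b + S X + P, h⟫ + ⟪S h, h⟫ / 2 := by
  obtain ⟨X, P, A, hP, hX, -, hA⟩ := exists_isTiltedMax_hasHessianAt hf hg (norm_nonneg S)
    (T := fun X => ⟪b, X⟫ + ⟪S X, X⟫ / 2) (T' := fun X => b + S X) (by fun_prop)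
    (fun X Z => by
      have := inner_add_half_inner_apply_add hS b X (Z - X)
      rw [add_sub_cancel] at this
      have := inner_apply_self_le S (Z - X)
      have : 0 ≤ ‖S‖ * ‖Z - X‖ ^ 2 := by positivity
      linarith)
    (fun X Z => by
      rw [add_sub_add_left_eq_sub, ← map_sub]
      exact S.le_opNorm _) hρ hγ hμ hgap
  refine ⟨X, P, A, hX.1, hP, hA, ?_⟩
  filter_upwards [Metric.ball_mem_nhds (0 : H) (half_pos hρ)] with h hh
  rw [mem_ball_zero_iff] at hh
  have hle := hX.2 (X + h) (by
    rw [add_sub_right_comm]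
    linarith [norm_add_le (X - X₀) h, hX.1])
  beta_reduce at hle
  rw [inner_add_half_inner_apply_add hS, inner_add_right] at hle
  rw [inner_add_left _ P]
  linarith

lemma exists_forall_isSupConv_hasHessianAt [FiniteDimensional ℝ H] {B : Set H} {w : H → ℝ}
    (hB : IsCompact B) (hw : ContinuousOn w B) {X₀ : H} {ρ : ℝ} (hρ : 0 < ρ)
    (hρB : closedBall X₀ ρ ⊆ B) (hS : (S : H →ₗ[ℝ] H).IsSymmetric) (b : H) {ν : ℝ} (hν : 0 < ν)
    (hmax : ∀ X ∈ B, w X - (⟪b, X⟫ + ⟪S X, X⟫ / 2) + ν * ‖X - X₀‖ ^ 2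
      ≤ w X₀ - (⟪b, X₀⟫ + ⟪S X₀, X₀⟫ / 2)) {μ : ℝ} (hμ : 0 < μ) :
    ∃ c, ∀ f Y, IsSupConv B w c f Y → ∃ X P A, ‖X - X₀‖ ≤ μ ∧ ‖Y X - X₀‖ < ρ ∧ ‖P‖ ≤ μ ∧
      HasHessianAt f (b + S X + P + c • X) A X ∧
      ∀ᶠ h in 𝓝 0,
        f (X + h) ≤ f X + ⟪b + S X + P + c • X, h⟫ + (⟪S h, h⟫ + c * ‖h‖ ^ 2) / 2 := by
  set ρ₁ := min (ρ / 2) μ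
  have hρ₁ : 0 < ρ₁ := by positivity
  have hρ₁ρ : ρ₁ ≤ ρ / 2 := min_le_left _ _
  obtain ⟨c, -, hclose⟩ := exists_forall_isSupConv_close hB hw (half_pos hρ)
    (by positivity : 0 < ν * ρ₁ ^ 2 / 8)
  refine ⟨c, fun f Y hf => ?_⟩
  have hX₀B : X₀ ∈ B := hρB (mem_closedBall_self hρ.le)
  have hball {X : H} (hX : ‖X - X₀‖ ≤ ρ₁) : X ∈ B :=
    hρB (mem_closedBall_iff_norm.2 (by linarith))
  have hScapply (X : H) : (S + c • ContinuousLinearMap.id ℝ H) X = S X + c • X := rfl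
  have hSc (X : H) : ⟪(S + c • ContinuousLinearMap.id ℝ H) X, X⟫ = ⟪S X, X⟫ + c * ‖X‖ ^ 2 := by
    rw [hScapply, inner_add_left, real_inner_smul_left, real_inner_self_eq_norm_sq]
  obtain ⟨X, P, A, hX, hP, hA, hle⟩ := exists_hasHessianAt_of_quadratic_gap
    (S := S + c • ContinuousLinearMap.id ℝ H) (X₀ := X₀) (hf.continuous hB.isBounded)
    hf.isSubgrad (fun X Z => by
      simpa [inner_add_left, inner_add_right, inner_smul_left, inner_smul_right] using hS X Z)
    b hρ₁ (by positivity : 0 < ν * ρ₁ ^ 2 / 8) hμ fun X hX hX' => by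
      have hannulus : ν * (ρ₁ / 2) ^ 2 ≤ ν * ‖X - X₀‖ ^ 2 := by gcongr
      have hcloseX := (hclose f Y hf X (hball hX')).2
      have hcloseX₀ := hf.le_sub hX₀B
      rw [hSc, hSc]
      linarith [hmax X (hball hX')]
  have hslope : b + (S + c • ContinuousLinearMap.id ℝ H) X + P = b + S X + P + c • X := by
    rw [hScapply]
    abel
  rw [hslope] at hA
  refine ⟨X, P, A, by linarith [min_le_right (ρ / 2) μ], ?_, hP, hA, ?_⟩
  · have := norm_sub_le_norm_sub_add_norm_sub (Y X) X X₀
    rw [norm_sub_rev (Y X) X] at this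
    linarith [(hclose f Y hf X (hball (by linarith))).1]
  · simpa only [hslope, hSc] using hle

end Quadratic

section Prod

lemma isCompact_setOf_fst_mem_snd_mem {E F : Type*} [NormedAddCommGroup E] [NormedSpace ℝ E]
    [NormedAddCommGroup F] [NormedSpace ℝ F] {B₁ : Set E} {B₂ : Set F} (h₁ : IsCompact B₁)
    (h₂ : IsCompact B₂) : IsCompact {X : WithLp 2 (E × F) | X.fst ∈ B₁ ∧ X.snd ∈ B₂} :=
  (WithLp.prodContinuousLinearEquiv 2 ℝ E F).toHomeomorph.isCompact_preimage.2 (h₁.prod h₂)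

lemma closedBall_subset_setOf_fst_mem_snd_mem {E F : Type*} [NormedAddCommGroup E]
    [NormedAddCommGroup F] (X : WithLp 2 (E × F)) (r : ℝ) :
    closedBall X r ⊆ {Z | Z.fst ∈ closedBall X.fst r ∧ Z.snd ∈ closedBall X.snd r} := fun Z hZ => by
  rw [mem_closedBall_iff_norm] at hZ
  exact ⟨mem_closedBall_iff_norm.2 ((WithLp.norm_fst_le _ (Z - X)).trans hZ),
    mem_closedBall_iff_norm.2 ((WithLp.norm_snd_le _ (Z - X)).trans hZ)⟩

end Prod

section Restriction

variable {E F : Type*} [NormedAddCommGroup E] [InnerProductSpace ℝ E] [NormedAddCommGroup F]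
  [InnerProductSpace ℝ F]

lemma HasHessianAt.isLittleO_comp {f : F → ℝ} {p X : F} {A : F →L[ℝ] F}
    (hf : HasHessianAt f p A X) (L : E →L[ℝ] F) :
    (fun ξ => f (X + L ξ) - f X - ⟪p, L ξ⟫ - ⟪A (L ξ), L ξ⟫ / 2) =o[𝓝 0] fun ξ => ‖ξ‖ ^ 2 := by
  have hL : Tendsto L (𝓝 0) (𝓝 0) := by simpa using L.continuous.tendsto 0
  exact (hf.comp_tendsto hL).trans_isBigO ((L.isBigO_id (𝓝 0)).norm_norm.pow 2)

lemma HasHessianAt.exists_fst {f : E → ℝ} {g : F → ℝ} {p X : WithLp 2 (E × F)}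
    {A : WithLp 2 (E × F) →L[ℝ] WithLp 2 (E × F)}
    (h : HasHessianAt (fun Z : WithLp 2 (E × F) => f Z.fst + g Z.snd) p A X) :
    ∃ A', HasHessianAt f p.fst A' X.fst := by
  set L : E →L[ℝ] WithLp 2 (E × F) :=
    (WithLp.prodContinuousLinearEquiv 2 ℝ E F).symm.toContinuousLinearMap ∘L .inl ℝ E F
  have hfst (ξ : E) : (L ξ).fst = ξ := rfl
  have hsnd (ξ : E) : (L ξ).snd = 0 := rfl
  refine ⟨WithLp.fstL 2 ℝ E F ∘L A ∘L L, (h.isLittleO_comp L).congr_left fun ξ => ?_⟩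
  simp [hfst, hsnd]

lemma HasHessianAt.exists_snd {f : E → ℝ} {g : F → ℝ} {p X : WithLp 2 (E × F)}
    {A : WithLp 2 (E × F) →L[ℝ] WithLp 2 (E × F)}
    (h : HasHessianAt (fun Z : WithLp 2 (E × F) => f Z.fst + g Z.snd) p A X) :
    ∃ A', HasHessianAt g p.snd A' X.snd := by
  set L : F →L[ℝ] WithLp 2 (E × F) :=
    (WithLp.prodContinuousLinearEquiv 2 ℝ E F).symm.toContinuousLinearMap ∘L .inr ℝ E F
  have hfst (ξ : F) : (L ξ).fst = 0 := rfl
  have hsnd (ξ : F) : (L ξ).snd = ξ := rfl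
  refine ⟨WithLp.sndL 2 ℝ E F ∘L A ∘L L, (h.isLittleO_comp L).congr_left fun ξ => ?_⟩
  simp [hfst, hsnd]

lemma HasHessianAt.inner_add_inner_le {f : E → ℝ} {g : F → ℝ} {p X : WithLp 2 (E × F)}
    {A₁ : E →L[ℝ] E} {A₂ : F →L[ℝ] F} {S : WithLp 2 (E × F) →L[ℝ] WithLp 2 (E × F)} {c : ℝ}
    (hf : HasHessianAt f p.fst A₁ X.fst) (hg : HasHessianAt g p.snd A₂ X.snd)
    (hle : ∀ᶠ h in 𝓝 0, f (X + h).fst + g (X + h).snd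
      ≤ f X.fst + g X.snd + ⟪p, h⟫ + (⟪S h, h⟫ + c * ‖h‖ ^ 2) / 2) (h : WithLp 2 (E × F)) :
    ⟪A₁ h.fst, h.fst⟫ + ⟪A₂ h.snd, h.snd⟫ ≤ ⟪S h, h⟫ + c * ‖h‖ ^ 2 := by
  have hrem := ((hf.isLittleO_comp (WithLp.fstL 2 ℝ E F)).add
    (hg.isLittleO_comp (WithLp.sndL 2 ℝ E F))).const_mul_left (-2)
  rw [← sub_nonpos]
  refine nonpos_of_eventually_le_of_isLittleO
    (Q := fun h => ⟪A₁ h.fst, h.fst⟫ + ⟪A₂ h.snd, h.snd⟫ - (⟪S h, h⟫ + c * ‖h‖ ^ 2))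
    (fun t h => ?_) hrem ?_ h
  · simp only [WithLp.smul_fst, WithLp.smul_snd, map_smul, real_inner_smul_left,
      real_inner_smul_right, norm_smul, mul_pow, Real.norm_eq_abs, sq_abs]
    ring
  · filter_upwards [hle] with h hh
    rw [WithLp.add_fst, WithLp.add_snd, inner_eq_inner_fst_add_inner_snd p] at hh
    simp only [WithLp.fstL_apply, WithLp.sndL_apply]
    linarith

lemma exists_isSupConv_hasHessianAt_of_strict_max [FiniteDimensional ℝ E] [FiniteDimensional ℝ F]
    {u : E → ℝ} {v : F → ℝ} {X₀ : WithLp 2 (E × F)} {ρ : ℝ} (hρ : 0 < ρ)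
    (hu : ContinuousOn u (closedBall X₀.fst ρ)) (hv : ContinuousOn v (closedBall X₀.snd ρ))
    {S : WithLp 2 (E × F) →L[ℝ] WithLp 2 (E × F)}
    (hS : (S : WithLp 2 (E × F) →ₗ[ℝ] WithLp 2 (E × F)).IsSymmetric) (b : WithLp 2 (E × F))
    {ν : ℝ} (hν : 0 < ν)
    (hmax : ∀ X : WithLp 2 (E × F), X.fst ∈ closedBall X₀.fst ρ → X.snd ∈ closedBall X₀.snd ρ →
      u X.fst + v X.snd - (⟪b, X⟫ + ⟪S X, X⟫ / 2) + ν * ‖X - X₀‖ ^ 2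
        ≤ u X₀.fst + v X₀.snd - (⟪b, X₀⟫ + ⟪S X₀, X₀⟫ / 2)) {μ : ℝ} (hμ : 0 < μ) :
    ∃ c f Y g Z, IsSupConv (closedBall X₀.fst ρ) u c f Y ∧
      IsSupConv (closedBall X₀.snd ρ) v c g Z ∧ ∃ X P A₁ A₂, ‖X - X₀‖ ≤ μ ∧ ‖P‖ ≤ μ ∧
      Y X.fst ∈ ball X₀.fst ρ ∧ Z X.snd ∈ ball X₀.snd ρ ∧
      HasHessianAt f ((b + S X + P).fst + c • X.fst) A₁ X.fst ∧
      HasHessianAt g ((b + S X + P).snd + c • X.snd) A₂ X.snd ∧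
      ∀ h : WithLp 2 (E × F),
        ⟪A₁ h.fst, h.fst⟫ + ⟪A₂ h.snd, h.snd⟫ ≤ ⟪S h, h⟫ + c * ‖h‖ ^ 2 := by
  have hcont : ContinuousOn (fun X : WithLp 2 (E × F) => u X.fst + v X.snd)
      {X | X.fst ∈ closedBall X₀.fst ρ ∧ X.snd ∈ closedBall X₀.snd ρ} :=
    (hu.comp (WithLp.fstL 2 ℝ E F).continuous.continuousOn fun X hX => hX.1).add
      (hv.comp (WithLp.sndL 2 ℝ E F).continuous.continuousOn fun X hX => hX.2)
  obtain ⟨c, hc⟩ := exists_forall_isSupConv_hasHessianAt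
    (isCompact_setOf_fst_mem_snd_mem (isCompact_closedBall _ _) (isCompact_closedBall _ _))
    hcont hρ (closedBall_subset_setOf_fst_mem_snd_mem X₀ ρ) hS b hν
    (fun X hX => hmax X hX.1 hX.2) hμ
  obtain ⟨f, Y, hf⟩ := exists_isSupConv (isCompact_closedBall X₀.fst ρ)
    (nonempty_closedBall.2 hρ.le) hu c
  obtain ⟨g, Z, hg⟩ := exists_isSupConv (isCompact_closedBall X₀.snd ρ)
    (nonempty_closedBall.2 hρ.le) hv c
  obtain ⟨X, P, A, hX, hYX, hP, hA, hle⟩ := hc _ _ (hf.prod hg)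
  obtain ⟨A₁, hA₁⟩ := hA.exists_fst
  obtain ⟨A₂, hA₂⟩ := hA.exists_snd
  exact ⟨c, f, Y, g, Z, hf, hg, X, P, A₁, A₂, hX, hP,
    mem_ball_iff_norm.2 ((WithLp.norm_fst_le _ _).trans_lt hYX),
    mem_ball_iff_norm.2 ((WithLp.norm_snd_le _ _).trans_lt hYX), hA₁, hA₂,
    hA₁.inner_add_inner_le hA₂ hle⟩

end Restriction

section Sums

variable {n : Type*} [Fintype n] [DecidableEq n] {d : ℕ}

lemma exists_isHermitian_quadForm_eq (L : EuclideanSpace ℝ n →L[ℝ] EuclideanSpace ℝ n) :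
    ∃ M : Matrix n n ℝ, M.IsHermitian ∧ ∀ x, quadForm M x = ⟪L x, x⟫ := by
  obtain ⟨N, rfl⟩ : ∃ N, Matrix.toEuclideanCLM (𝕜 := ℝ) N = L :=
    ⟨_, StarAlgEquiv.apply_symm_apply _ L⟩
  refine ⟨(2⁻¹ : ℝ) • (N + N.conjTranspose), ?_, fun x => ?_⟩
  · rw [Matrix.IsHermitian, Matrix.conjTranspose_smul, star_trivial, Matrix.conjTranspose_add,
      Matrix.conjTranspose_conjTranspose, add_comm]
  · have hconj : quadForm N.conjTranspose x = quadForm N x := by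
      rw [quadForm, quadForm, ← Matrix.star_eq_conjTranspose, map_star,
        ContinuousLinearMap.star_eq_adjoint, ContinuousLinearMap.adjoint_inner_left,
        real_inner_comm]
    rw [quadForm_smul, quadForm_add, hconj, quadForm]
    ring

lemma IsSupConv.touchedAbove {B : Set (Euc d)} {u f : Euc d → ℝ} {Y : Euc d → Euc d} {c : ℝ}
    (hf : IsSupConv B u c f Y) {x p : Euc d} {A : Euc d →L[ℝ] Euc d}
    (hA : HasHessianAt f (p + c • x) A x) (hB : B ∈ 𝓝 (Y x)) {N : Mat d}
    (hN : ∀ ξ, quadForm N ξ = ⟪A ξ, ξ⟫) {μ : ℝ} (hμ : 0 < μ) :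
    TouchedAbove u (Y x) p (N + (μ - c) • 1) := by
  have hshift : Tendsto (fun y => x + (y - Y x)) (𝓝 (Y x)) (𝓝 x) := by
    simpa using Continuous.tendsto (by fun_prop : Continuous fun y => x + (y - Y x)) (Y x)
  filter_upwards [hB, hshift.eventually (hA.eventually_le (half_pos hμ))] with y hy hle
  have hsub := hf.sub_le_sub (x := x) (h := y - Y x) (by rwa [add_sub_cancel])
  rw [add_sub_cancel] at hsub
  rw [add_sub_cancel_left, ← hN, inner_add_left, real_inner_smul_left] at hle
  rw [quadPoly, quadForm_add, quadForm_smul_one]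
  linarith

/-- Theorem on sums: the Jensen–Alexandrov lemma is applied to the sup-convolutions of `u` and `v`,
and the second order expansions obtained are transferred back to `u` and `v`. -/
theorem exists_touchedAbove_of_strict_max {u v : Euc d → ℝ} {X₀ : WithLp 2 (Euc d × Euc d)} {ρ : ℝ}
    (hρ : 0 < ρ) (hu : ContinuousOn u (closedBall X₀.fst ρ))
    (hv : ContinuousOn v (closedBall X₀.snd ρ))
    {S : WithLp 2 (Euc d × Euc d) →L[ℝ] WithLp 2 (Euc d × Euc d)}
    (hS : (S : WithLp 2 (Euc d × Euc d) →ₗ[ℝ] WithLp 2 (Euc d × Euc d)).IsSymmetric)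
    (b : WithLp 2 (Euc d × Euc d)) {ν : ℝ} (hν : 0 < ν)
    (hmax : ∀ X : WithLp 2 (Euc d × Euc d),
      X.fst ∈ closedBall X₀.fst ρ → X.snd ∈ closedBall X₀.snd ρ →
      u X.fst + v X.snd - (⟪b, X⟫ + ⟪S X, X⟫ / 2) + ν * ‖X - X₀‖ ^ 2
        ≤ u X₀.fst + v X₀.snd - (⟪b, X₀⟫ + ⟪S X₀, X₀⟫ / 2)) {μ : ℝ} (hμ : 0 < μ) :
    ∃ x ∈ ball X₀.fst ρ, ∃ y ∈ ball X₀.snd ρ, ∃ X P M₁ M₂,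
      ‖X - X₀‖ ≤ μ ∧ ‖P‖ ≤ μ ∧ M₁.IsHermitian ∧ M₂.IsHermitian ∧
      TouchedAbove u x (b + S X + P).fst M₁ ∧ TouchedAbove v y (b + S X + P).snd M₂ ∧
      ∀ h : WithLp 2 (Euc d × Euc d),
        quadForm M₁ h.fst + quadForm M₂ h.snd ≤ ⟪S h, h⟫ + μ * ‖h‖ ^ 2 := by
  obtain ⟨c, f, Y, g, Z, hf, hg, X, P, A₁, A₂, hX, hP, hYX, hZX, hA₁, hA₂, hle⟩ :=
    exists_isSupConv_hasHessianAt_of_strict_max hρ hu hv hS b hν hmax hμ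
  obtain ⟨N₁, hN₁, hN₁A⟩ := exists_isHermitian_quadForm_eq A₁
  obtain ⟨N₂, hN₂, hN₂A⟩ := exists_isHermitian_quadForm_eq A₂
  refine ⟨_, hYX, _, hZX, X, P, N₁ + (μ - c) • 1, N₂ + (μ - c) • 1, hX, hP,
    hN₁.add (isHermitian_smul_one _), hN₂.add (isHermitian_smul_one _),
    hf.touchedAbove hA₁ (closedBall_mem_nhds_of_mem hYX) hN₁A hμ,
    hg.touchedAbove hA₂ (closedBall_mem_nhds_of_mem hZX) hN₂A hμ, fun h => ?_⟩
  have hquad := hle h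
  have hnorm := WithLp.prod_norm_sq_eq_of_L2 h
  rw [quadForm_add, quadForm_add, quadForm_smul_one, quadForm_smul_one, hN₁A, hN₂A]
  rw [hnorm] at hquad ⊢
  linarith

end Sums

/-! ### The doubling argument of Ishii and Lions -/

section Doubling

variable {d : ℕ}

lemma exists_touchedAbove_of_max {u v : Euc d → ℝ} {X₀ : WithLp 2 (Euc d × Euc d)} {ρ : ℝ}
    (hρ : 0 < ρ) (hu : ContinuousOn u (closedBall X₀.fst ρ))
    (hv : ContinuousOn v (closedBall X₀.snd ρ))
    {S : WithLp 2 (Euc d × Euc d) →L[ℝ] WithLp 2 (Euc d × Euc d)}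
    (hS : (S : WithLp 2 (Euc d × Euc d) →ₗ[ℝ] WithLp 2 (Euc d × Euc d)).IsSymmetric)
    (p₀ : WithLp 2 (Euc d × Euc d))
    (hmax : ∀ X : WithLp 2 (Euc d × Euc d),
      X.fst ∈ closedBall X₀.fst ρ → X.snd ∈ closedBall X₀.snd ρ →
      u X.fst + v X.snd
        ≤ u X₀.fst + v X₀.snd + ⟪p₀, X - X₀⟫ + ⟪S (X - X₀), X - X₀⟫ / 2) {μ : ℝ} (hμ : 0 < μ) :
    ∃ x ∈ ball X₀.fst ρ, ∃ y ∈ ball X₀.snd ρ, ∃ p M₁ M₂, ‖p - p₀‖ ≤ μ ∧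
      M₁.IsHermitian ∧ M₂.IsHermitian ∧ TouchedAbove u x p.fst M₁ ∧ TouchedAbove v y p.snd M₂ ∧
      ∀ h : WithLp 2 (Euc d × Euc d),
        quadForm M₁ h.fst + quadForm M₂ h.snd ≤ ⟪S h, h⟫ + μ * ‖h‖ ^ 2 := by
  set T := S + (μ / 2) • ContinuousLinearMap.id ℝ (WithLp 2 (Euc d × Euc d)) with hT
  have hTapply : ∀ X, T X = S X + (μ / 2) • X := fun X => by simp [hT]
  have hTsymm : (T : WithLp 2 (Euc d × Euc d) →ₗ[ℝ] WithLp 2 (Euc d × Euc d)).IsSymmetric :=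
    hS.add (LinearMap.IsSymmetric.id.smul (conj_trivial _))
  have hκ : 0 < min (μ / 2) (μ / 2 / (‖T‖ + 1)) := by positivity
  obtain ⟨x, hx, y, hy, X, P, M₁, M₂, hX, hP, hM₁, hM₂, h₁, h₂, hle⟩ :=
    exists_touchedAbove_of_strict_max hρ hu hv hTsymm (p₀ - T X₀)
      (by positivity : 0 < μ / 4) (fun X hX hX' => by
        have hexp := inner_add_half_inner_apply_add hTsymm (p₀ - T X₀) X₀ (X - X₀)
        rw [add_sub_cancel, sub_add_cancel, hTapply (X - X₀), inner_add_left (S _),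
          real_inner_smul_left, real_inner_self_eq_norm_sq] at hexp
        linarith [hmax X hX hX']) hκ
  have hTX : ‖T (X - X₀)‖ ≤ μ / 2 :=
    calc ‖T (X - X₀)‖ ≤ (‖T‖ + 1) * (μ / 2 / (‖T‖ + 1)) :=
          T.le_of_opNorm_le_of_le (by linarith) (hX.trans (min_le_right _ _))
      _ = μ / 2 := by field_simp
  have hslope : p₀ - T X₀ + T X + P - p₀ = T (X - X₀) + P := by rw [map_sub]; abel
  refine ⟨x, hx, y, hy, _, M₁, M₂, ?_, hM₁, hM₂, h₁, h₂, fun h => ?_⟩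
  · rw [hslope]
    linarith [norm_add_le (T (X - X₀)) P, min_le_left (μ / 2) (μ / 2 / (‖T‖ + 1))]
  · have hquad := hle h
    rw [hTapply, inner_add_left, real_inner_smul_left, real_inner_self_eq_norm_sq] at hquad
    have hmin := mul_le_mul_of_nonneg_right (min_le_left (μ / 2) (μ / 2 / (‖T‖ + 1)))
      (sq_nonneg ‖h‖)
    linarith

lemma exists_isSymmetric_inner_doubled {E : Type*} [NormedAddCommGroup E] [InnerProductSpace ℝ E]
    [CompleteSpace E] {W : E →L[ℝ] E} (hW : (W : E →ₗ[ℝ] E).IsSymmetric) (K : ℝ) :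
    ∃ S : WithLp 2 (E × E) →L[ℝ] WithLp 2 (E × E),
      (S : WithLp 2 (E × E) →ₗ[ℝ] WithLp 2 (E × E)).IsSymmetric ∧
      ∀ X, ⟪S X, X⟫ = ⟪W (X.fst - X.snd), X.fst - X.snd⟫ + K * ‖X‖ ^ 2 := by
  obtain ⟨D, hD⟩ : ∃ D : WithLp 2 (E × E) →L[ℝ] E, ∀ X, D X = X.fst - X.snd :=
    ⟨WithLp.fstL 2 ℝ E E - WithLp.sndL 2 ℝ E E, fun _ => by
      rw [_root_.sub_apply, WithLp.fstL_apply, WithLp.sndL_apply]⟩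
  obtain ⟨T, hT⟩ : ∃ T, T = D.adjoint ∘L W ∘L D := ⟨_, rfl⟩
  have hTsymm : (T : WithLp 2 (E × E) →ₗ[ℝ] WithLp 2 (E × E)).IsSymmetric := by
    rw [hT, ← ContinuousLinearMap.isSelfAdjoint_iff_isSymmetric]
    exact (ContinuousLinearMap.isSelfAdjoint_iff_isSymmetric.2 hW).adjoint_conj D
  refine ⟨T + K • ContinuousLinearMap.id ℝ _, ?_, fun X => ?_⟩
  · exact hTsymm.add (LinearMap.IsSymmetric.id.smul (conj_trivial K))
  rw [_root_.add_apply, inner_add_left, hT, ContinuousLinearMap.comp_apply,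
    ContinuousLinearMap.adjoint_inner_left, _root_.smul_apply, real_inner_smul_left,
    ContinuousLinearMap.id_apply, real_inner_self_eq_norm_sq, ContinuousLinearMap.comp_apply, hD]

/-- The diagonal directions `(ξ, ξ)` only see the penalization `K`, the antidiagonal directions
`(ξ, -ξ)` see four times the Hessian `W` of the modulus. -/
lemma exists_touchedAbove_of_doubling_max {u v : Euc d → ℝ} {x₁ y₁ p q : Euc d} {ρ : ℝ}
    (hρ : 0 < ρ) (hu : ContinuousOn u (closedBall x₁ ρ)) (hv : ContinuousOn v (closedBall y₁ ρ))
    {W : Euc d →L[ℝ] Euc d} (hW : (W : Euc d →ₗ[ℝ] Euc d).IsSymmetric) {K : ℝ}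
    (hmax : ∀ x ∈ closedBall x₁ ρ, ∀ y ∈ closedBall y₁ ρ,
      u x + v y ≤ u x₁ + v y₁ + (⟪p, x - x₁⟫ + ⟪q, y - y₁⟫)
        + ⟪W (x - x₁ - (y - y₁)), x - x₁ - (y - y₁)⟫ / 2 + K * (‖x - x₁‖ ^ 2 + ‖y - y₁‖ ^ 2))
    {μ : ℝ} (hμ : 0 < μ) :
    ∃ x ∈ ball x₁ ρ, ∃ y ∈ ball y₁ ρ, ∃ p' q' M₁ M₂, ‖p' - p‖ ≤ μ ∧ ‖q' - q‖ ≤ μ ∧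
      M₁.IsHermitian ∧ M₂.IsHermitian ∧ TouchedAbove u x p' M₁ ∧ TouchedAbove v y q' M₂ ∧
      ∀ ξ, quadForm M₁ ξ + quadForm M₂ ξ ≤ (4 * K + μ) * ‖ξ‖ ^ 2 ∧
        quadForm M₁ ξ + quadForm M₂ ξ ≤ 4 * ⟪W ξ, ξ⟫ + (4 * K + μ) * ‖ξ‖ ^ 2 := by
  obtain ⟨X₀, rfl, rfl⟩ : ∃ X₀ : WithLp 2 (Euc d × Euc d), X₀.fst = x₁ ∧ X₀.snd = y₁ :=
    ⟨.toLp 2 (x₁, y₁), rfl, rfl⟩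
  obtain ⟨P₀, rfl, rfl⟩ : ∃ P₀ : WithLp 2 (Euc d × Euc d), P₀.fst = p ∧ P₀.snd = q :=
    ⟨.toLp 2 (p, q), rfl, rfl⟩
  obtain ⟨S, hS, hSinner⟩ := exists_isSymmetric_inner_doubled hW (2 * K)
  obtain ⟨x, hx, y, hy, P, M₁, M₂, hP, hM₁, hM₂, h₁, h₂, hle⟩ :=
    exists_touchedAbove_of_max hρ hu hv hS P₀ (fun X hX hX' => by
      rw [hSinner, inner_eq_inner_fst_add_inner_snd, WithLp.prod_norm_sq_eq_of_L2]
      refine (hmax _ hX _ hX').trans_eq ?_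
      simp only [WithLp.sub_fst, WithLp.sub_snd]
      ring) (half_pos hμ)
  have hle' : ∀ ξ η : Euc d, quadForm M₁ ξ + quadForm M₂ η
      ≤ ⟪W (ξ - η), ξ - η⟫ + (2 * K + μ / 2) * (‖ξ‖ ^ 2 + ‖η‖ ^ 2) := fun ξ η => by
    obtain ⟨H, rfl, rfl⟩ : ∃ H : WithLp 2 (Euc d × Euc d), H.fst = ξ ∧ H.snd = η :=
      ⟨.toLp 2 (ξ, η), rfl, rfl⟩
    have hH := hle H
    rw [hSinner, WithLp.prod_norm_sq_eq_of_L2] at hH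
    linarith
  refine ⟨x, hx, y, hy, P.fst, P.snd, M₁, M₂,
    ((WithLp.norm_fst_le _ (P - P₀)).trans hP).trans (half_le_self hμ.le),
    ((WithLp.norm_snd_le _ (P - P₀)).trans hP).trans (half_le_self hμ.le),
    hM₁, hM₂, h₁, h₂, fun ξ => ⟨?_, ?_⟩⟩
  · have hdiag := hle' ξ ξ
    rw [sub_self, map_zero, inner_zero_left] at hdiag
    linarith
  · have hanti := hle' ξ ((-1 : ℝ) • ξ)
    rw [show ξ - (-1 : ℝ) • ξ = (2 : ℝ) • ξ by module, quadForm_apply_smul, map_smul,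
      real_inner_smul_left, real_inner_smul_right, norm_smul, norm_neg, norm_one] at hanti
    linarith

end Doubling

section IshiiLions

lemma norm_sub_norm_sq_smul_add_le {E : Type*} [NormedAddCommGroup E] [InnerProductSpace ℝ E]
    {e ζ : E} {s : ℝ} (hs : 0 < s) (he : ‖e‖ = 1) (hζ : ‖ζ‖ ≤ s / 2) :
    ‖s • e + ζ‖ - ‖s • e + ζ‖ ^ 2
      ≤ s - s ^ 2 + (1 - 2 * s) * ⟪e, ζ⟫ + ((‖ζ‖ ^ 2 - ⟪e, ζ⟫ ^ 2) / s - ‖ζ‖ ^ 2) := by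
  have hinner : |⟪e, ζ⟫| ≤ ‖ζ‖ := by simpa [he] using abs_real_inner_le_norm e ζ
  have hsq : ‖s • e + ζ‖ ^ 2 = s ^ 2 + 2 * s * ⟪e, ζ⟫ + ‖ζ‖ ^ 2 := by
    rw [norm_add_sq_real, norm_smul, he, Real.norm_eq_abs, mul_one, sq_abs, real_inner_smul_left]
    ring
  suffices ‖s • e + ζ‖ ≤ s + ⟪e, ζ⟫ + (‖ζ‖ ^ 2 - ⟪e, ζ⟫ ^ 2) / s by linarith
  have hquot : 0 ≤ (‖ζ‖ ^ 2 - ⟪e, ζ⟫ ^ 2) / s :=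
    div_nonneg (sub_nonneg.2 (sq_le_sq.2 (by rwa [abs_norm]))) hs.le
  have hdiv : (‖ζ‖ ^ 2 - ⟪e, ζ⟫ ^ 2) / s * s = ‖ζ‖ ^ 2 - ⟪e, ζ⟫ ^ 2 :=
    div_mul_cancel₀ _ hs.ne'
  have hlow : 0 ≤ s + 2 * ⟪e, ζ⟫ := by linarith [neg_le_of_abs_le hinner]
  refine le_of_sq_le_sq ?_ (by linarith)
  nlinarith [mul_nonneg hquot hlow, sq_nonneg ((‖ζ‖ ^ 2 - ⟪e, ζ⟫ ^ 2) / s)]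

variable {d : ℕ}

lemma UniformlyElliptic.add_mul_le_add_mul_of_quadForm_le {lam Lam : ℝ} {F : Mat d → ℝ}
    (hF : UniformlyElliptic lam Lam F) (hlam : 0 ≤ lam) (hLam : 0 ≤ Lam) {M₁ M₂ : Mat d}
    (hM₁ : M₁.IsHermitian) (hM₂ : M₂.IsHermitian) {c : ℝ} (hc : 0 ≤ c)
    (hle : ∀ ξ, quadForm M₁ ξ + quadForm M₂ ξ ≤ c * ‖ξ‖ ^ 2) {e : Euc d} (he : ‖e‖ = 1) {m : ℝ}
    (hm : quadForm M₁ e + quadForm M₂ e ≤ c - m) :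
    F M₁ + lam * m ≤ F (-M₂) + Lam * c := by
  set Q : Mat d := c • 1 - (M₁ + M₂) with hQ
  have hquad : ∀ ξ, quadForm Q ξ = c * ‖ξ‖ ^ 2 - (quadForm M₁ ξ + quadForm M₂ ξ) := fun ξ => by
    rw [hQ, quadForm_sub, quadForm_add, quadForm_smul_one]
  have hpos : Q.PosSemidef :=
    posSemidef_of_forall_quadForm_nonneg ((isHermitian_smul_one c).sub (hM₁.add hM₂)) fun ξ => by
      rw [hquad]
      exact sub_nonneg.2 (hle ξ)
  have hnorm : m ≤ matOpNorm Q := by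
    have := (le_abs_self _).trans (abs_quadForm_le Q e)
    rw [hquad, he] at this
    linarith
  have hsum : M₁ + Q = -M₂ + c • 1 := by
    rw [hQ]
    abel
  have hlow := (hF.2 M₁ Q hM₁ hpos).1
  rw [hsum] at hlow
  linarith [hF.add_smul_one_le hLam hM₂.neg hc, mul_le_mul_of_nonneg_left hnorm hlam]

/-- The penalized doubling functional, with the strictly concave modulus `t - t²`. -/
def doubling {E : Type*} [NormedAddCommGroup E] (u : E → ℝ) (x₀ : E) (N K : ℝ) (X : E × E) : ℝ :=
  u X.1 - u X.2 - N * (‖X.1 - X.2‖ - ‖X.1 - X.2‖ ^ 2) - K * (‖X.1 - x₀‖ ^ 2 + ‖X.2 - x₀‖ ^ 2)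

lemma mem_ball_of_doubling_pos {E : Type*} [NormedAddCommGroup E] {u : E → ℝ} {x₀ : E} {N r : ℝ}
    (hN : 0 ≤ N) (hr : 0 < r) (hr' : r ≤ 1 / 2) (hu : ∀ x ∈ closedBall x₀ r, |u x| ≤ 1)
    {X : E × E} (hX : X ∈ closedBall x₀ r ×ˢ closedBall x₀ r)
    (hpos : 0 < doubling u x₀ N (2 / r ^ 2) X) :
    X.1 ∈ ball x₀ r ∧ X.2 ∈ ball x₀ r ∧ 0 < ‖X.1 - X.2‖ := by
  have hX₁ := mem_closedBall_iff_norm.1 hX.1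
  have hX₂ := mem_closedBall_iff_norm.1 hX.2
  have hdist : ‖X.1 - X.2‖ ≤ 1 := by
    have := norm_sub_le (X.1 - x₀) (X.2 - x₀)
    rw [sub_sub_sub_cancel_right] at this
    linarith
  have hmod : 0 ≤ N * (‖X.1 - X.2‖ - ‖X.1 - X.2‖ ^ 2) :=
    mul_nonneg hN (by nlinarith [norm_nonneg (X.1 - X.2)])
  rw [doubling] at hpos
  have hpen : ‖X.1 - x₀‖ ^ 2 + ‖X.2 - x₀‖ ^ 2 < r ^ 2 := by
    have : 2 / r ^ 2 * (‖X.1 - x₀‖ ^ 2 + ‖X.2 - x₀‖ ^ 2) < 2 := by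
      linarith [le_of_abs_le (hu _ hX.1), neg_le_of_abs_le (hu _ hX.2)]
    rw [div_mul_eq_mul_div, div_lt_iff₀ (by positivity)] at this
    linarith
  refine ⟨mem_ball_iff_norm.2 (lt_of_pow_lt_pow_left₀ 2 hr.le (by nlinarith)),
    mem_ball_iff_norm.2 (lt_of_pow_lt_pow_left₀ 2 hr.le (by nlinarith)),
    norm_pos_iff.2 fun heq => hpos.not_ge ?_⟩
  rw [sub_eq_zero.1 heq, sub_self, sub_self, norm_zero]
  have : 0 ≤ 2 / r ^ 2 * (‖X.2 - x₀‖ ^ 2 + ‖X.2 - x₀‖ ^ 2) := by positivity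
  linarith

lemma exists_isSymmetric_inner_rankOne {E : Type*} [NormedAddCommGroup E] [InnerProductSpace ℝ E]
    (a b : ℝ) (e : E) : ∃ W : E →L[ℝ] E, (W : E →ₗ[ℝ] E).IsSymmetric ∧
      ∀ ζ, ⟪W ζ, ζ⟫ = a * ‖ζ‖ ^ 2 + b * ⟪e, ζ⟫ ^ 2 := by
  refine ⟨a • .id ℝ E + b • InnerProductSpace.rankOne ℝ e e,
    (LinearMap.IsSymmetric.id.smul (conj_trivial a)).add
      ((InnerProductSpace.isSymmetric_rankOne_self e).smul (conj_trivial b)), fun ζ => ?_⟩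
  simp only [_root_.add_apply, _root_.smul_apply, ContinuousLinearMap.id_apply, inner_add_left,
    InnerProductSpace.rankOne_apply, real_inner_smul_left, real_inner_self_eq_norm_sq]
  ring

lemma doubling_le_of_smul_add {E : Type*} [NormedAddCommGroup E] [InnerProductSpace ℝ E]
    {u : E → ℝ} {x₀ x₁ y₁ x y e : E} {N K s : ℝ} (hN : 0 ≤ N) (hs : 0 < s) (he : ‖e‖ = 1)
    (hse : x₁ - y₁ = s • e) (hζ : ‖x - x₁ - (y - y₁)‖ ≤ s / 2)
    (hle : doubling u x₀ N K (x, y) ≤ doubling u x₀ N K (x₁, y₁)) :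
    u x - u y ≤ u x₁ - u y₁
      + (⟪(N * (1 - 2 * s)) • e + (2 * K) • (x₁ - x₀), x - x₁⟫
        + ⟪-(N * (1 - 2 * s)) • e + (2 * K) • (y₁ - x₀), y - y₁⟫)
      + N * ((‖x - x₁ - (y - y₁)‖ ^ 2 - ⟪e, x - x₁ - (y - y₁)⟫ ^ 2) / s
        - ‖x - x₁ - (y - y₁)‖ ^ 2)
      + K * (‖x - x₁‖ ^ 2 + ‖y - y₁‖ ^ 2) := by
  have hmod := mul_le_mul_of_nonneg_left (norm_sub_norm_sq_smul_add_le hs he hζ) hN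
  have hxy : x - y = s • e + (x - x₁ - (y - y₁)) := by rw [← hse]; abel
  have hs₁ : ‖x₁ - y₁‖ = s := by rw [hse, norm_smul, he, mul_one, Real.norm_of_nonneg hs.le]
  have hpen : ∀ z w : E, ‖z - x₀‖ ^ 2 = ‖w - x₀‖ ^ 2 + 2 * ⟪w - x₀, z - w⟫ + ‖z - w‖ ^ 2 :=
    fun z w => by rw [← norm_add_sq_real, add_comm, sub_add_sub_cancel]
  simp only [doubling, hxy, hs₁, hpen x x₁, hpen y y₁] at hle
  simp only [inner_add_left, real_inner_smul_left]
  rw [inner_sub_right e (x - x₁) (y - y₁)] at hmod ⊢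
  linarith

/-- In the direction `e` of the maximum point, the slopes and the concavity are those of the modulus
`N (t - t²)`, up to the penalization. -/
lemma exists_touchedAbove_of_isMaxOn_doubling {u : Euc d → ℝ} {x₀ x₁ y₁ : Euc d} {N K r : ℝ}
    (hN : 0 ≤ N) (hu : ContinuousOn u (closedBall x₀ r)) (hx₁ : x₁ ∈ ball x₀ r)
    (hy₁ : y₁ ∈ ball x₀ r) (hne : 0 < ‖x₁ - y₁‖)
    (hmax : IsMaxOn (doubling u x₀ N K) (closedBall x₀ r ×ˢ closedBall x₀ r) (x₁, y₁)) :
    ∃ x ∈ ball x₀ r, ∃ y ∈ ball x₀ r, ∃ e p q M₁ M₂, ‖e‖ = 1 ∧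
      ‖p - ((N * (1 - 2 * ‖x₁ - y₁‖)) • e + (2 * K) • (x₁ - x₀))‖ ≤ 1 ∧
      ‖q - (-(N * (1 - 2 * ‖x₁ - y₁‖)) • e + (2 * K) • (y₁ - x₀))‖ ≤ 1 ∧
      M₁.IsHermitian ∧ M₂.IsHermitian ∧ TouchedAbove u x p M₁ ∧
      TouchedAbove (fun z => -u z) y q M₂ ∧
      (∀ ξ, quadForm M₁ ξ + quadForm M₂ ξ ≤ (4 * K + 1) * ‖ξ‖ ^ 2) ∧
      quadForm M₁ e + quadForm M₂ e ≤ 4 * K + 1 - 8 * N := by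
  set s := ‖x₁ - y₁‖
  obtain ⟨e, he, hse⟩ : ∃ e : Euc d, ‖e‖ = 1 ∧ x₁ - y₁ = s • e :=
    ⟨s⁻¹ • (x₁ - y₁), norm_smul_inv_norm (norm_pos_iff.1 hne),
      (smul_inv_smul₀ hne.ne' _).symm⟩
  obtain ⟨W, hW, hWinner⟩ :=
    exists_isSymmetric_inner_rankOne (2 * N * (1 / s - 1)) (-(2 * N / s)) e
  obtain ⟨ρ, ⟨hρx, hρy, hρs⟩, hρ⟩ : ∃ ρ, (closedBall x₁ ρ ⊆ ball x₀ r ∧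
      closedBall y₁ ρ ⊆ ball x₀ r ∧ ρ < s / 4) ∧ 0 < ρ :=
    (((eventually_closedBall_subset (isOpen_ball.mem_nhds hx₁)).and
      ((eventually_closedBall_subset (isOpen_ball.mem_nhds hy₁)).and
        (eventually_lt_nhds (by positivity)))).filter_mono nhdsWithin_le_nhds |>.and
          self_mem_nhdsWithin).exists (f := 𝓝[>] (0 : ℝ))
  have hmax' : ∀ x ∈ closedBall x₁ ρ, ∀ y ∈ closedBall y₁ ρ, u x + -u y ≤ u x₁ + -u y₁
      + (⟪(N * (1 - 2 * s)) • e + (2 * K) • (x₁ - x₀), x - x₁⟫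
        + ⟪-(N * (1 - 2 * s)) • e + (2 * K) • (y₁ - x₀), y - y₁⟫)
      + ⟪W (x - x₁ - (y - y₁)), x - x₁ - (y - y₁)⟫ / 2 + K * (‖x - x₁‖ ^ 2 + ‖y - y₁‖ ^ 2) := by
    intro x hx y hy
    have hζ : ‖x - x₁ - (y - y₁)‖ ≤ s / 2 := by
      linarith [norm_sub_le (x - x₁) (y - y₁), mem_closedBall_iff_norm.1 hx,
        mem_closedBall_iff_norm.1 hy]
    have := doubling_le_of_smul_add hN hne he hse hζ
      (hmax ⟨ball_subset_closedBall (hρx hx), ball_subset_closedBall (hρy hy)⟩)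
    rw [hWinner]
    calc _ = u x - u y := by ring
      _ ≤ _ := this
      _ = _ := by ring
  obtain ⟨x, hx, y, hy, p, q, M₁, M₂, hp, hq, hM₁, hM₂, ht₁, ht₂, hle⟩ :=
    exists_touchedAbove_of_doubling_max hρ (hu.mono (hρx.trans ball_subset_closedBall))
      (hu.mono (hρy.trans ball_subset_closedBall)).neg hW hmax' one_pos
  refine ⟨x, hρx (ball_subset_closedBall hx), y, hρy (ball_subset_closedBall hy), e, p, q, M₁, M₂,
    he, hp, hq, hM₁, hM₂, ht₁, ht₂, fun ξ => (hle ξ).1, ?_⟩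
  have hconc := (hle e).2
  rw [hWinner, real_inner_self_eq_norm_sq, he] at hconc
  refine hconc.trans_eq ?_
  field_simp
  ring

lemma norm_mem_Icc_of_norm_sub_le {x₀ x₁ e p : Euc d} {N r t : ℝ} (hr : 0 < r) (hr' : r ≤ 1)
    (hx₁ : x₁ ∈ ball x₀ r) (hN : 20 / r ≤ N) (ht : N / 2 ≤ |t|) (ht' : |t| ≤ N) (he : ‖e‖ = 1)
    (hp : ‖p - (t • e + (2 * (2 / r ^ 2)) • (x₁ - x₀))‖ ≤ 1) : ‖p‖ ∈ Icc (N / 4) (2 * N) := by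
  have hr_inv : 1 ≤ 1 / r := (one_le_div hr).2 hr'
  have h20 : 20 / r = 20 * (1 / r) := by ring
  have hpen : ‖(2 * (2 / r ^ 2)) • (x₁ - x₀)‖ ≤ 4 * (1 / r) :=
    calc ‖(2 * (2 / r ^ 2)) • (x₁ - x₀)‖ ≤ 2 * (2 / r ^ 2) * r := by
          rw [norm_smul, Real.norm_of_nonneg (by positivity)]
          gcongr
          exact (mem_ball_iff_norm.1 hx₁).le
      _ = 4 * (1 / r) := by field_simp; ring
  have hdist : ‖p - t • e‖ ≤ 1 + 4 * (1 / r) := by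
    have := norm_add_le (p - (t • e + (2 * (2 / r ^ 2)) • (x₁ - x₀)))
      ((2 * (2 / r ^ 2)) • (x₁ - x₀))
    rw [sub_add_eq_sub_sub, sub_add_cancel] at this
    rw [sub_add_eq_sub_sub] at hp
    linarith
  have habs := (abs_norm_sub_norm_le p (t • e)).trans hdist
  rw [norm_smul, he, mul_one, Real.norm_eq_abs, abs_le] at habs
  constructor <;> linarith

/-- If the bound failed, the doubling functional would have a positive interior maximum. There the
concavity of the modulus makes `M₁ + M₂` smaller than `-8 N` up to a constant in one direction,
which ellipticity excludes for large `N`. -/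
theorem sub_le_mul_norm_sub_of_touchedAbove {lam Lam : ℝ} (hlam : 0 ≤ lam) (hLam : 0 ≤ Lam)
    {F : Mat d → ℝ} (hF : UniformlyElliptic lam Lam F) {u : Euc d → ℝ} {x₀ : Euc d} {r N : ℝ}
    (hr : 0 < r) (hr' : r ≤ 1 / 8) (hu : ContinuousOn u (closedBall x₀ r))
    (hu1 : ∀ x ∈ closedBall x₀ r, |u x| ≤ 1) (hN : 20 / r ≤ N)
    (hNlam : 2 + Lam * (8 / r ^ 2 + 1) < 8 * lam * N)
    (hsub : ∀ x ∈ ball x₀ r, ∀ p M, M.IsHermitian → TouchedAbove u x p M →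
      ‖p‖ ∈ Icc (N / 4) (2 * N) → -1 ≤ F M)
    (hsup : ∀ x ∈ ball x₀ r, ∀ p M, M.IsHermitian → TouchedAbove (fun y => -u y) x p M →
      ‖p‖ ∈ Icc (N / 4) (2 * N) → -1 ≤ -F (-M))
    {y : Euc d} (hy : y ∈ closedBall x₀ r) : u x₀ - u y ≤ (N + 2 / r) * ‖x₀ - y‖ := by
  have hx₀ : x₀ ∈ closedBall x₀ r := mem_closedBall_self hr.le
  have hN₀ : 0 ≤ N := (by positivity : 0 ≤ 20 / r).trans hN
  suffices doubling u x₀ N (2 / r ^ 2) (x₀, y) ≤ 0 by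
    have hpen : 2 / r ^ 2 * ‖x₀ - y‖ ^ 2 ≤ 2 / r * ‖x₀ - y‖ :=
      calc 2 / r ^ 2 * ‖x₀ - y‖ ^ 2 = 2 / r ^ 2 * ‖x₀ - y‖ * ‖x₀ - y‖ := by ring
        _ ≤ 2 / r ^ 2 * r * ‖x₀ - y‖ := by gcongr; exact mem_closedBall_iff_norm'.1 hy
        _ = 2 / r * ‖x₀ - y‖ := by field_simp
    simp only [doubling, sub_self, norm_zero, norm_sub_rev y x₀] at this
    linarith [mul_nonneg hN₀ (sq_nonneg ‖x₀ - y‖)]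
  have hcont : ContinuousOn (doubling u x₀ N (2 / r ^ 2)) (closedBall x₀ r ×ˢ closedBall x₀ r) :=
    (((hu.comp continuousOn_fst fun X hX => hX.1).sub
      (hu.comp continuousOn_snd fun X hX => hX.2)).sub
        (Continuous.continuousOn (by fun_prop))).sub (Continuous.continuousOn (by fun_prop))
  obtain ⟨X, hX, hmax⟩ := ((isCompact_closedBall x₀ r).prod
    (isCompact_closedBall x₀ r)).exists_isMaxOn ⟨(x₀, x₀), hx₀, hx₀⟩ hcont
  refine (hmax (mk_mem_prod hx₀ hy)).trans (not_lt.1 fun hpos => ?_)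
  obtain ⟨hX₁, hX₂, hne⟩ := mem_ball_of_doubling_pos hN₀ hr (by linarith) hu1 hX hpos
  obtain ⟨x, hx, z, hz, e, p, q, M₁, M₂, he, hp, hq, hM₁, hM₂, ht₁, ht₂, hle, hconc⟩ :=
    exists_touchedAbove_of_isMaxOn_doubling hN₀ hu hX₁ hX₂ hne hmax
  have hs : ‖X.1 - X.2‖ ≤ 1 / 4 := by
    have := norm_sub_le (X.1 - x₀) (X.2 - x₀)
    rw [sub_sub_sub_cancel_right] at this
    linarith [mem_ball_iff_norm.1 hX₁, mem_ball_iff_norm.1 hX₂]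
  have ht : N / 2 ≤ |N * (1 - 2 * ‖X.1 - X.2‖)| ∧ |N * (1 - 2 * ‖X.1 - X.2‖)| ≤ N := by
    rw [abs_of_nonneg (mul_nonneg hN₀ (by linarith))]
    constructor <;> nlinarith
  have hF₁ := hsub x hx p M₁ hM₁ ht₁
    (norm_mem_Icc_of_norm_sub_le hr (by linarith) hX₁ hN ht.1 ht.2 he hp)
  have hF₂ := hsup z hz q M₂ hM₂ ht₂ (norm_mem_Icc_of_norm_sub_le hr (by linarith) hX₂ hN
    (by rw [abs_neg]; exact ht.1) (by rw [abs_neg]; exact ht.2) he hq)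
  have hcurv : 4 * (2 / r ^ 2) + 1 = 8 / r ^ 2 + 1 := by ring
  rw [hcurv] at hle hconc
  linarith [hF.add_mul_le_add_mul_of_quadForm_le hlam hLam hM₁ hM₂ (by positivity) hle he hconc]

end IshiiLions

/-! ### The Lipschitz estimate -/

section Lipschitz

variable {d : ℕ}

/-- `u` is a viscosity subsolution of `|q + Du|^θ F(D²u) = f` in the unit ball for some exponent
with `|θ| ≤ Θ` and some right-hand side with `|f| (1 + |q|)^(-θ) ≤ ε`. -/
def SmallSubSol (Θ ε : ℝ) (F : Mat d → ℝ) (q : Euc d) (u : Euc d → ℝ) : Prop :=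
  ∃ θ f : Euc d → ℝ, (∀ x ∈ ball (0 : Euc d) 1, |θ x| ≤ Θ) ∧
    (∀ x ∈ ball (0 : Euc d) 1, |f x| * (1 + ‖q‖) ^ (-θ x) ≤ ε) ∧ ViscSubSol F θ f q u

lemma rpow_le_rpow_of_mem_Icc_inv {c R t Θ : ℝ} (hR : 1 ≤ R) (hc : c ∈ Icc R⁻¹ R)
    (ht : |t| ≤ Θ) : c ^ t ≤ R ^ Θ := by
  have hR0 : 0 < R := one_pos.trans_le hR
  have hc0 : 0 < c := (inv_pos.2 hR0).trans_le hc.1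
  have hlog : |Real.log c| ≤ Real.log R :=
    abs_le.2 ⟨Real.log_inv R ▸ Real.log_le_log (inv_pos.2 hR0) hc.1, Real.log_le_log hc0 hc.2⟩
  rw [Real.rpow_def_of_pos hc0, Real.rpow_def_of_pos hR0, Real.exp_le_exp]
  calc Real.log c * t ≤ |Real.log c| * |t| := (le_abs_self _).trans (abs_mul _ _).le
    _ ≤ Real.log R * Θ := by gcongr; exact Real.log_nonneg hR

/-- A bound for both `(1 + |q|) / |q + p|` and its inverse when `|p| ≤ P` and `κ ≤ |q + p|`. -/
def slopeRatio (P κ : ℝ) : ℝ := (1 + P) * (1 + κ⁻¹)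

lemma one_le_slopeRatio {P κ : ℝ} (hP : 0 ≤ P) (hκ : 0 ≤ κ) : 1 ≤ slopeRatio P κ :=
  one_le_mul_of_one_le_of_one_le (by linarith) (by linarith [inv_nonneg.2 hκ])

lemma one_add_norm_div_mem_Icc_slopeRatio {P κ : ℝ} (hκ : 0 < κ) {q p : Euc d} (hp : ‖p‖ ≤ P)
    (hqp : κ ≤ ‖q + p‖) :
    (1 + ‖q‖) / ‖q + p‖ ∈ Icc (slopeRatio P κ)⁻¹ (slopeRatio P κ) := by
  have hP : 0 ≤ P := (norm_nonneg p).trans hp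
  have hb : 0 < ‖q + p‖ := hκ.trans_le hqp
  have ha : 0 < 1 + ‖q‖ := by positivity
  have hq : ‖q‖ ≤ ‖q + p‖ + P := by linarith [norm_le_add_norm_add q p]
  have hbq : ‖q + p‖ ≤ ‖q‖ + P := (norm_add_le q p).trans (by gcongr)
  constructor
  · rw [← inv_div]
    gcongr
    calc ‖q + p‖ / (1 + ‖q‖) ≤ 1 + P := by
          rw [div_le_iff₀ ha]
          nlinarith [mul_nonneg hP (norm_nonneg q)]
      _ ≤ slopeRatio P κ := le_mul_of_one_le_right (by positivity)
          (by linarith [inv_pos.2 hκ])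
  · calc (1 + ‖q‖) / ‖q + p‖ ≤ (‖q + p‖ + (1 + P)) / ‖q + p‖ :=
          div_le_div_of_nonneg_right (by linarith) hb.le
      _ = 1 + (1 + P) * ‖q + p‖⁻¹ := by field_simp
      _ ≤ (1 + P) + (1 + P) * κ⁻¹ := add_le_add (by linarith) (by gcongr)
      _ = slopeRatio P κ := by rw [slopeRatio]; ring

lemma SmallSubSol.neg_le_of_touchedAbove {Θ ε P κ : ℝ} {F : Mat d → ℝ} {q x p : Euc d}
    {u : Euc d → ℝ} {M : Mat d} (hu : SmallSubSol Θ ε F q u) (hκ : 0 < κ)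
    (hx : x ∈ ball (0 : Euc d) 1) (hM : M.IsHermitian) (h : TouchedAbove u x p M)
    (hp : ‖p‖ ≤ P) (hqp : κ ≤ ‖q + p‖) : -(ε * slopeRatio P κ ^ Θ) ≤ F M := by
  obtain ⟨θ, f, hθ, hf, hsub⟩ := hu
  have hb : 0 < ‖q + p‖ := hκ.trans_le hqp
  have ha : 0 < 1 + ‖q‖ := by positivity
  have hratio : ((1 + ‖q‖) / ‖q + p‖) ^ θ x ≤ slopeRatio P κ ^ Θ :=
    rpow_le_rpow_of_mem_Icc_inv (one_le_slopeRatio ((norm_nonneg p).trans hp) hκ.le)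
      (one_add_norm_div_mem_Icc_slopeRatio hκ hp hqp) (hθ x hx)
  have hε : 0 ≤ ε := (by positivity : (0 : ℝ) ≤ _).trans (hf x hx)
  have hfx : |f x| ≤ ‖q + p‖ ^ θ x * (ε * slopeRatio P κ ^ Θ) :=
    calc |f x| = ‖q + p‖ ^ θ x
          * (|f x| * (1 + ‖q‖) ^ (-θ x) * ((1 + ‖q‖) / ‖q + p‖) ^ θ x) := by
          rw [Real.div_rpow ha.le hb.le, Real.rpow_neg ha.le]
          field_simp
      _ ≤ _ := by gcongr; exact hf x hx
  refine le_of_mul_le_mul_left ?_ (Real.rpow_pos_of_pos hb (θ x))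
  linarith [neg_abs_le (f x), hsub.le_of_touchedAbove hx hM h (norm_pos_iff.1 hb)]

lemma SmallSubSol.sub_le_mul_norm_sub {lam Lam Θ ε N : ℝ} {F : Mat d → ℝ} {q x y : Euc d}
    {u : Euc d → ℝ} (hlam : 0 ≤ lam) (hLam : 0 ≤ Lam) (hF : UniformlyElliptic lam Lam F)
    (hu : ContinuousOn u (ball 0 1)) (hu1 : ∀ z ∈ ball (0 : Euc d) 1, |u z| ≤ 1)
    (hsub : SmallSubSol Θ ε F q u)
    (hsup : SmallSubSol Θ ε (fun M => -F (-M)) (-q) (fun z => -u z))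
    (hN : 640 ≤ N) (hNlam : 2 + 8193 * Lam < 8 * lam * N)
    (hε : ε * slopeRatio (2 * N) 1 ^ Θ ≤ 1)
    (hq : ∀ p : Euc d, ‖p‖ ∈ Icc (N / 4) (2 * N) → 1 ≤ ‖q + p‖)
    (hx : ‖x‖ ≤ 15 / 16) (hxy : ‖y - x‖ ≤ 1 / 32) : u x - u y ≤ (N + 64) * ‖x - y‖ := by
  have hball : closedBall x (1 / 32) ⊆ ball 0 1 :=
    closedBall_subset_ball' (by rw [dist_zero_right]; linarith)
  have key := sub_le_mul_norm_sub_of_touchedAbove (r := 1 / 32) (N := N) hlam hLam hF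
    (by norm_num) (by norm_num) (hu.mono hball) (fun z hz => hu1 z (hball hz)) (by linarith)
    (by linarith)
    (fun z hz p M hM htouch hp => by
      have := hsub.neg_le_of_touchedAbove one_pos (hball (ball_subset_closedBall hz)) hM htouch
        hp.2 (hq p hp)
      linarith)
    (fun z hz p M hM htouch hp => by
      have hqp : 1 ≤ ‖-q + p‖ := by
        rw [← norm_neg, neg_add, neg_neg]
        exact hq (-p) (by rwa [norm_neg])
      have := hsup.neg_le_of_touchedAbove one_pos (hball (ball_subset_closedBall hz)) hM htouch
        hp.2 hqp
      linarith)
    (mem_closedBall_iff_norm.2 hxy)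
  rwa [show N + 2 / (1 / 32) = N + 64 by norm_num] at key

/-- The constants do not depend on `q`: if `|q|` is large, the equation is nondegenerate at moderate
slopes, and if `|q|` is bounded, it is nondegenerate at large slopes. -/
theorem exists_forall_sub_le_mul_norm_sub {lam Lam : ℝ} (hlam : 0 < lam) (hLam : 0 ≤ Lam)
    (Θ : ℝ) : ∃ ε₁ > 0, ∃ L > 0, ∀ (F : Mat d → ℝ) (q : Euc d) (u : Euc d → ℝ),
      UniformlyElliptic lam Lam F → ContinuousOn u (ball 0 1) →
      (∀ x ∈ ball (0 : Euc d) 1, |u x| ≤ 1) → SmallSubSol Θ ε₁ F q u →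
      SmallSubSol Θ ε₁ (fun M => -F (-M)) (-q) (fun x => -u x) →
      ∀ x y : Euc d, ‖x‖ ≤ 15 / 16 → ‖y - x‖ ≤ 1 / 32 → u x - u y ≤ L * ‖x - y‖ := by
  obtain ⟨N₀, hN₀, hNlam⟩ : ∃ N₀ ≥ 640, 2 + 8193 * Lam < 8 * lam * N₀ := by
    refine ⟨640 + (2 + 8193 * Lam) / (8 * lam), le_add_of_nonneg_right (by positivity), ?_⟩
    rw [mul_add, mul_div_cancel₀ _ (by positivity)]
    linarith
  set N₁ := 8 * N₀ + 8
  have hR (N : ℝ) (hN : N₀ ≤ N) : 0 < slopeRatio (2 * N) 1 ^ Θ :=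
    Real.rpow_pos_of_pos (one_pos.trans_le (one_le_slopeRatio (by linarith) zero_le_one)) Θ
  refine ⟨min (1 / slopeRatio (2 * N₀) 1 ^ Θ) (1 / slopeRatio (2 * N₁) 1 ^ Θ),
    lt_min (one_div_pos.2 (hR N₀ le_rfl)) (one_div_pos.2 (hR N₁ (by linarith))), N₁ + 64,
    by linarith, fun F q u hF hu hu1 hsub hsup x y hx hxy => ?_⟩
  rcases le_total (2 * N₀ + 1) ‖q‖ with hq | hq
  · refine (SmallSubSol.sub_le_mul_norm_sub hlam.le hLam hF hu hu1 hsub hsup hN₀ hNlam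
      ((le_div_iff₀ (hR N₀ le_rfl)).1 (min_le_left _ _)) (fun p hp => ?_) hx hxy).trans ?_
    · linarith [norm_le_add_norm_add q p, hp.2]
    · gcongr
      linarith
  · refine SmallSubSol.sub_le_mul_norm_sub hlam.le hLam hF hu hu1 hsub hsup (by linarith)
      (hNlam.trans_le (by gcongr; linarith))
      ((le_div_iff₀ (hR N₁ (by linarith))).1 (min_le_right _ _)) (fun p hp => ?_) hx hxy
    rw [add_comm q p]
    linarith [norm_le_add_norm_add p q, hp.1]

end Lipschitz

/-! ### Stability -/

section Stability

variable {d : ℕ}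

lemma posSemidef_of_forall_sub_le_quadForm {k : Euc d → ℝ} {s : Set (Euc d)} {x₀ : Euc d}
    {M : Mat d} (hs : Convex ℝ s) (hx₀ : s ∈ 𝓝 x₀) (hM : M.IsHermitian)
    (hk : ∀ y ∈ s, ∀ z ∈ s, k z - k y ≤ quadForm M (z - y) / 2) : M.PosSemidef := by
  have hle : ∀ y ∈ s, ∀ z ∈ s, k z ≤ k y := by
    intro y hy z hz
    have hseg (t : ℝ) (h₀ : 0 ≤ t) (h₁ : t ≤ 1) : y + t • (z - y) ∈ s :=
      hs.add_smul_sub_mem hy hz ⟨h₀, h₁⟩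
    simpa using le_of_forall_sub_le_mul_sq (ψ := fun t => k (y + t • (z - y)))
      (C := quadForm M (z - y) / 2) fun t r h₀ htr h₁ => by
        have := hk _ (hseg t h₀ (htr.trans h₁)) _ (hseg r (h₀.trans htr) h₁)
        rw [add_sub_add_left_eq_sub, ← sub_smul, quadForm_apply_smul] at this
        linarith
  refine posSemidef_of_forall_quadForm_nonneg hM fun v => ?_
  have htend : Tendsto (fun c : ℝ => x₀ + c • v) (𝓝[>] 0) (𝓝 x₀) :=
    tendsto_nhdsWithin_of_tendsto_nhds (Continuous.tendsto' (by fun_prop) _ _ (by simp))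
  obtain ⟨c, hc, hc₀⟩ := ((htend.eventually hx₀).and self_mem_nhdsWithin).exists
  have hx₀s : x₀ ∈ s := mem_of_mem_nhds hx₀
  have hup := hk _ hx₀s _ hc
  rw [add_sub_cancel_left, quadForm_apply_smul] at hup
  have hconst := hle _ hc _ hx₀s
  exact nonneg_of_mul_nonneg_right (by linarith) (pow_pos hc₀ 2)

lemma exists_tendsto_isMaxOn_of_tendstoUniformlyOn {X ι : Type*} [TopologicalSpace X]
    (U : Ultrafilter ι) {u : ι → X → ℝ} {h : X → ℝ} {K : Set X} (hK : IsCompact K)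
    (hne : K.Nonempty) (hu : ∀ n, ContinuousOn (u n) K) (hconv : TendstoUniformlyOn u h U K) :
    ∃ x : ι → X, ∃ z ∈ K, (∀ n, IsMaxOn (u n) K (x n)) ∧ Tendsto x U (𝓝 z) ∧ IsMaxOn h K z := by
  choose x hx hmax using fun n => hK.exists_isMaxOn hne (hu n)
  obtain ⟨z, hz, hxz⟩ := hK.ultrafilter_le_nhds (U.map x)
    (le_principal_iff.2 (Filter.mem_map.2 (univ_mem' hx)))
  refine ⟨x, z, hz, hmax, hxz, fun y hy => ?_⟩
  have hcont : ContinuousOn h K := hconv.continuousOn (.of_forall hu)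
  have hlim : Tendsto (fun n => u n (x n)) U (𝓝 (h z)) :=
    hconv.tendsto_comp (hcont z hz) (tendsto_nhdsWithin_iff.2 ⟨hxz, .of_forall hx⟩)
  exact le_of_tendsto_of_tendsto' (hconv.tendsto_at hy) hlim fun n => hmax n hy

lemma touchedAbove_of_isMaxOn {u : Euc d → ℝ} {s : Set (Euc d)} {x₀ x p : Euc d} {M : Mat d}
    (hM : M.IsHermitian) (hx : s ∈ 𝓝 x) (hmax : IsMaxOn (fun y => u y - quadPoly x₀ p M y) s x) :
    TouchedAbove u x (p + Matrix.toEuclideanCLM (𝕜 := ℝ) M (x - x₀)) M := by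
  filter_upwards [hx] with y hy
  have hle : u y - quadPoly x₀ p M y ≤ u x - quadPoly x₀ p M x := hmax hy
  rw [quadPoly_eq_add_quadPoly hM x₀ p x y] at hle
  linarith

/-- Where the limit operator is negative, the equations can only be satisfied by degenerating, so
the slopes of the touching paraboloids approach the critical slopes `-q n`. -/
lemma tendsto_neg_of_touchedAbove {ι : Type*} {l : Filter ι} {Θ g : ℝ} {F : ι → Mat d → ℝ}
    {q x p : ι → Euc d} {u : ι → Euc d → ℝ} {ε : ι → ℝ} {M : Mat d} {p₀ : Euc d}
    (hsub : ∀ n, SmallSubSol Θ (ε n) (F n) (q n) (u n)) (hε : Tendsto ε l (𝓝 0))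
    (hM : M.IsHermitian) (hF : Tendsto (fun n => F n M) l (𝓝 g)) (hg : g < 0)
    (hx : ∀ᶠ n in l, x n ∈ ball 0 1) (h : ∀ᶠ n in l, TouchedAbove (u n) (x n) (p n) M)
    (hp : Tendsto p l (𝓝 p₀)) : Tendsto q l (𝓝 (-p₀)) := by
  suffices Tendsto (fun n => q n + p n) l (𝓝 0) by simpa using this.sub hp
  rw [Metric.tendsto_nhds]
  intro κ hκ
  have herr : Tendsto (fun n => -(ε n * slopeRatio (‖p₀‖ + 1) κ ^ Θ)) l (𝓝 0) := by
    simpa using (hε.mul_const (slopeRatio (‖p₀‖ + 1) κ ^ Θ)).neg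
  filter_upwards [hF.eventually_lt herr hg, hx, h,
    hp.norm.eventually (ge_mem_nhds (lt_add_one ‖p₀‖))] with n hlt hxn hn hpn
  rw [dist_zero_right]
  by_contra! hκn
  exact hlt.not_ge ((hsub n).neg_le_of_touchedAbove hκ hxn hM hn hpn hκn)

lemma mul_norm_sub_le_of_isMaxOn_sub_quadPoly {h : Euc d → ℝ} {s : Set (Euc d)}
    {x₀ z p ξ : Euc d} {M : Mat d} {μ : ℝ} (hx₀ : x₀ ∈ s)
    (hz : h z ≤ h x₀ + quadPoly x₀ p M z)
    (hmax : IsMaxOn (fun y => h y - quadPoly x₀ (p + ξ) (M + (2 * μ) • 1) y) s z) :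
    μ * ‖z - x₀‖ ≤ ‖ξ‖ := by
  have hle : h x₀ - quadPoly x₀ (p + ξ) (M + (2 * μ) • 1) x₀
    ≤ h z - quadPoly x₀ (p + ξ) (M + (2 * μ) • 1) z := hmax hx₀
  rw [quadPoly_self, quadPoly, inner_add_left, quadForm_add, quadForm_smul_one] at hle
  rw [quadPoly] at hz
  rcases (norm_nonneg (z - x₀)).eq_or_lt with h₀ | hpos
  · rw [← h₀, mul_zero]
    exact norm_nonneg ξ
  · refine le_of_mul_le_mul_right ?_ hpos
    linarith [neg_le_of_abs_le (abs_real_inner_le_norm ξ (z - x₀))]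

lemma injective_of_forall_norm_lt_exists {E : Type*} [NormedAddCommGroup E] [NormedSpace ℝ E]
    [FiniteDimensional ℝ E] {T : E →L[ℝ] E} {ρ : ℝ} (hρ : 0 < ρ)
    (h : ∀ ξ, ‖ξ‖ < ρ → ∃ w, T w = ξ) : Function.Injective T := by
  have hball : ball 0 ρ ⊆ ((T : E →ₗ[ℝ] E).range : Set E) := fun ξ hξ =>
    h ξ (mem_ball_zero_iff.1 hξ)
  have hrange : (T : E →ₗ[ℝ] E).range = ⊤ := Submodule.eq_top_of_nonempty_interior' _
    ⟨0, interior_maximal hball isOpen_ball (mem_ball_self hρ)⟩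
  exact LinearMap.injective_iff_surjective.2 (LinearMap.range_eq_top.1 hrange)

/-- Since every slope is attained, `M` is invertible, so every point near `x₀` is a contact
point. -/
lemma posSemidef_of_forall_exists_isMaxOn_sub_quadPoly {h : Euc d → ℝ} {s : Set (Euc d)}
    {x₀ p : Euc d} {M : Mat d} {ρ : ℝ} (hM : M.IsHermitian) (hs : s ∈ 𝓝 x₀) (hρ : 0 < ρ)
    (hmax : ∀ ξ : Euc d, ‖ξ‖ < ρ → ∃ z, ξ + Matrix.toEuclideanCLM (𝕜 := ℝ) M (z - x₀) = 0 ∧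
      IsMaxOn (fun y => h y - quadPoly x₀ (p + ξ) M y) s z) : M.PosSemidef := by
  set T := Matrix.toEuclideanCLM (𝕜 := ℝ) M with hT
  have hinj : Function.Injective T := injective_of_forall_norm_lt_exists hρ fun ξ hξ => by
    obtain ⟨z, hz, -⟩ := hmax ξ hξ
    exact ⟨x₀ - z, by rw [← neg_sub, map_neg, neg_eq_of_add_eq_zero_left hz]⟩
  have hnhds : s ∩ {y | ‖T (y - x₀)‖ < ρ} ∈ 𝓝 x₀ :=
    inter_mem hs ((isOpen_lt (by fun_prop) continuous_const).mem_nhds (by simpa using hρ))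
  obtain ⟨r, hr, hball⟩ := nhds_basis_ball.mem_iff.1 hnhds
  refine posSemidef_of_forall_sub_le_quadForm (k := fun y => h y - ⟪p, y⟫) (convex_ball x₀ r)
    (ball_mem_nhds x₀ hr) hM fun y hy z hz => ?_
  obtain ⟨w, hw, hwmax⟩ := hmax (-T (y - x₀)) (by rw [norm_neg]; exact (hball hy).2)
  obtain rfl : y = w := sub_left_injective (hinj (neg_add_eq_zero.1 hw))
  have hle : h z - quadPoly x₀ (p + -T (y - x₀)) M z ≤ h y - quadPoly x₀ (p + -T (y - x₀)) M y :=
    hwmax (hball hz).1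
  rw [quadPoly_eq_add_quadPoly hM x₀ _ y z, ← hT, neg_add_cancel_right] at hle
  have hsplit : quadPoly y p M z = ⟪p, z⟫ - ⟪p, y⟫ + quadForm M (z - y) / 2 := by
    rw [quadPoly, inner_sub_right]
  linarith

variable {ι : Type*} {lam Lam Θ : ℝ} {F : ι → Mat d → ℝ} {G : Mat d → ℝ} {q : ι → Euc d}
  {u : ι → Euc d → ℝ} {h : Euc d → ℝ} {ε : ι → ℝ}

lemma exists_isMaxOn_sub_quadPoly_tendsto_neg (U : Ultrafilter ι) {x₀ p ξ : Euc d} {M : Mat d}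
    {g μ r : ℝ} (hM : M.IsHermitian)
    (hF : Tendsto (fun n => F n (M + (2 * μ) • 1)) U (𝓝 g)) (hg : g < 0)
    (hr : 0 < r) (hball : closedBall x₀ r ⊆ ball 0 1)
    (hu : ∀ n, ContinuousOn (u n) (closedBall x₀ r))
    (hsub : ∀ n, SmallSubSol Θ (ε n) (F n) (q n) (u n)) (hε : Tendsto ε U (𝓝 0))
    (hconv : TendstoUniformlyOn u h U (closedBall x₀ r))
    (hle : ∀ y ∈ closedBall x₀ r, h y ≤ h x₀ + quadPoly x₀ p M y) (hμ : 0 < μ)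
    (hξ : ‖ξ‖ < μ * r) :
    ∃ z, μ * ‖z - x₀‖ ≤ ‖ξ‖ ∧
      IsMaxOn (fun y => h y - quadPoly x₀ (p + ξ) (M + (2 * μ) • 1) y) (closedBall x₀ r) z ∧
      Tendsto q U
        (𝓝 (-(p + ξ + Matrix.toEuclideanCLM (𝕜 := ℝ) (M + (2 * μ) • 1) (z - x₀)))) := by
  have hM' := hM.add (isHermitian_smul_one (n := Fin d) (2 * μ))
  have hx₀ : x₀ ∈ closedBall x₀ r := mem_closedBall_self hr.le
  have hpoly : ContinuousOn (quadPoly x₀ (p + ξ) (M + (2 * μ) • 1)) (closedBall x₀ r) :=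
    (contDiff_quadPoly _ _ _).continuous.continuousOn
  have hconv' : TendstoUniformlyOn (fun n y => u n y - quadPoly x₀ (p + ξ) (M + (2 * μ) • 1) y)
      (fun y => h y - quadPoly x₀ (p + ξ) (M + (2 * μ) • 1) y) U (closedBall x₀ r) := by
    rw [Metric.tendstoUniformlyOn_iff] at hconv ⊢
    simpa only [dist_sub_right] using hconv
  obtain ⟨x, z, hz, hxmax, hxz, hzmax⟩ := exists_tendsto_isMaxOn_of_tendstoUniformlyOn U
    (isCompact_closedBall x₀ r) ⟨x₀, hx₀⟩ (fun n => (hu n).sub hpoly) hconv'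
  have hzx₀ := mul_norm_sub_le_of_isMaxOn_sub_quadPoly hx₀ (hle z hz) hzmax
  have hzr : z ∈ ball x₀ r :=
    mem_ball_iff_norm.2 (lt_of_mul_lt_mul_left (hzx₀.trans_lt hξ) hμ.le)
  have hxr : ∀ᶠ n in (U : Filter ι), x n ∈ ball x₀ r := hxz.eventually (isOpen_ball.mem_nhds hzr)
  refine ⟨z, hzx₀, hzmax, tendsto_neg_of_touchedAbove hsub hε hM' hF hg
    (hxr.mono fun n hn => hball (ball_subset_closedBall hn))
    (hxr.mono fun n hn => touchedAbove_of_isMaxOn hM' (closedBall_mem_nhds_of_mem hn) (hxmax n))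
    (Tendsto.const_add _ ?_)⟩
  exact ((ContinuousLinearMap.continuous _).tendsto _).comp (hxz.sub_const x₀)

/-- If `G (M + 2μ) < 0` at a contact paraboloid, then every tilt of the slightly opened paraboloid
has contact points whose slopes converge along with `-q n`. As that limit is the same for all
tilts, `M + 2μ` is nonnegative, which contradicts ellipticity. -/
theorem quadSubSol_of_tendstoUniformlyOn (U : Ultrafilter ι) (hlam : 0 ≤ lam) (hLam : 0 < Lam)
    (hG : UniformlyElliptic lam Lam G)
    (hFG : ∀ M : Mat d, M.IsHermitian → Tendsto (fun n => F n M) U (𝓝 (G M)))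
    {s : Set (Euc d)} (hs : IsOpen s) (hs1 : s ⊆ ball 0 1) (hu : ∀ n, ContinuousOn (u n) s)
    (hsub : ∀ n, SmallSubSol Θ (ε n) (F n) (q n) (u n)) (hε : Tendsto ε U (𝓝 0))
    (hconv : TendstoUniformlyOn u h U s) : QuadSubSol G h s := by
  intro x₀ hx₀ p M hM htouch
  suffices key : ∀ μ : ℝ, 0 < μ → 0 ≤ G (M + (2 * μ) • 1) by
    refine le_of_forall_pos_le_add fun η hη => ?_
    have hpos := key (η / (2 * Lam)) (by positivity)
    have hle := hG.add_smul_one_le hLam.le hM (c := 2 * (η / (2 * Lam))) (by positivity)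
    rw [show Lam * (2 * (η / (2 * Lam))) = η by field_simp] at hle
    linarith
  intro μ hμ
  by_contra! hneg
  have hM' := hM.add (isHermitian_smul_one (n := Fin d) (2 * μ))
  obtain ⟨r, hr, hball⟩ := nhds_basis_closedBall.mem_iff.1 (inter_mem (hs.mem_nhds hx₀) htouch)
  have hrs : closedBall x₀ r ⊆ s := fun y hy => (hball hy).1
  have hcontact (ξ : Euc d) (hξ : ‖ξ‖ < μ * r) := exists_isMaxOn_sub_quadPoly_tendsto_neg U hM
    (hFG _ hM') hneg hr (hrs.trans hs1) (fun n => (hu n).mono hrs) hsub hε (hconv.mono hrs)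
    (fun y hy => (hball hy).2) hμ hξ
  have hq : Tendsto q U (𝓝 (-p)) := by
    obtain ⟨z, hz, -, hqz⟩ := hcontact 0 (by rw [norm_zero]; positivity)
    have hzx₀ : z - x₀ = 0 := by
      rw [norm_zero] at hz
      exact norm_le_zero_iff.1 (nonpos_of_mul_nonpos_right hz hμ)
    simpa only [hzx₀, map_zero, add_zero] using hqz
  have hpos : (M + (2 * μ) • 1).PosSemidef :=
    posSemidef_of_forall_exists_isMaxOn_sub_quadPoly hM' (closedBall_mem_nhds x₀ hr)
      (mul_pos hμ hr) fun ξ hξ => by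
        obtain ⟨z, -, hz, hqz⟩ := hcontact ξ hξ
        have hslope := neg_injective (tendsto_nhds_unique hqz hq)
        rw [add_assoc, add_eq_left] at hslope
        exact ⟨z, hslope, hz⟩
  have hmono := hG.mono hlam Matrix.isHermitian_zero hpos
  rw [zero_add, hG.1] at hmono
  exact hneg.not_ge hmono

end Stability

/-! ### Compactness -/

section Compactness

variable {ι : Type*}

lemma equicontinuousOn_of_sub_le_mul_dist {X : Type*} [PseudoMetricSpace X] {K : Set X}
    {u : ι → X → ℝ} {L r : ℝ} (hr : 0 < r)
    (hu : ∀ n, ∀ x ∈ K, ∀ y ∈ K, dist x y < r → u n x - u n y ≤ L * dist x y) :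
    EquicontinuousOn u K := by
  intro x hx V hV
  obtain ⟨η, hη, hηV⟩ := Metric.mem_uniformity_dist.1 hV
  have hmodulus : ∀ᶠ y in 𝓝[K] x, L * dist x y < η := by
    refine Tendsto.eventually_lt_const hη (tendsto_nhdsWithin_of_tendsto_nhds ?_)
    exact Continuous.tendsto' (by fun_prop) _ _ (by rw [dist_self, mul_zero])
  filter_upwards [hmodulus, self_mem_nhdsWithin,
    mem_nhdsWithin_of_mem_nhds (ball_mem_nhds x hr)] with y hyη hyK hyr n
  have hxy := hu n x hx y hyK (by rwa [dist_comm])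
  have hyx := hu n y hyK x hx hyr
  rw [dist_comm y x] at hyx
  exact hηV (abs_sub_lt_iff.2 ⟨hxy.trans_lt hyη, hyx.trans_lt hyη⟩)

variable (U : Ultrafilter ι)

lemma exists_abs_le_tendsto_ultrafilter {a : ι → ℝ} {B : ℝ} (ha : ∀ n, |a n| ≤ B) :
    ∃ l, |l| ≤ B ∧ Tendsto a U (𝓝 l) := by
  obtain ⟨l, hl, hlim⟩ := (isCompact_Icc (a := -B) (b := B)).ultrafilter_le_nhds (U.map a)
    (le_principal_iff.2 (mem_map.2 (univ_mem' fun n => abs_le.1 (ha n))))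
  exact ⟨l, abs_le.2 hl, hlim⟩

lemma exists_uniformlyElliptic_tendsto {d : ℕ} {lam Lam : ℝ} (hlam : 0 ≤ lam) (hLam : 0 ≤ Lam)
    {F : ι → Mat d → ℝ} (hF : ∀ n, UniformlyElliptic lam Lam (F n)) :
    ∃ G : Mat d → ℝ, UniformlyElliptic lam Lam G ∧
      ∀ M : Mat d, M.IsHermitian → Tendsto (fun n => F n M) U (𝓝 (G M)) := by
  have hlim : ∀ M : Mat d, ∃ l, M.IsHermitian → Tendsto (fun n => F n M) U (𝓝 l) := by
    intro M
    by_cases hM : M.IsHermitian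
    · obtain ⟨l, -, hl⟩ :=
        exists_abs_le_tendsto_ultrafilter U fun n => (hF n).abs_le hlam hLam hM
      exact ⟨l, fun _ => hl⟩
    · exact ⟨0, fun h => absurd h hM⟩
  choose G hG using hlim
  refine ⟨G, ⟨?_, fun M N hM hN => ?_⟩, hG⟩
  · refine tendsto_nhds_unique (hG 0 Matrix.isHermitian_zero) ?_
    simp only [fun n => (hF n).1, tendsto_const_nhds]
  · have hdiff := (hG (M + N) (hM.add hN.isHermitian)).sub (hG M hM)
    exact ⟨ge_of_tendsto hdiff (.of_forall fun n => ((hF n).2 M N hM hN).1),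
      le_of_tendsto hdiff (.of_forall fun n => ((hF n).2 M N hM hN).2)⟩

lemma exists_tendstoUniformlyOn_of_equicontinuousOn {X : Type*} [TopologicalSpace X] {K : Set X}
    (hK : IsCompact K) {u : ι → X → ℝ} (hu : EquicontinuousOn u K) {B : ℝ}
    (hB : ∀ n, ∀ x ∈ K, |u n x| ≤ B) :
    ∃ h : X → ℝ, (∀ x ∈ K, |h x| ≤ B) ∧ TendstoUniformlyOn u h U K := by
  have hlim : ∀ x, ∃ l, x ∈ K → |l| ≤ B ∧ Tendsto (fun n => u n x) U (𝓝 l) := by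
    intro x
    by_cases hx : x ∈ K
    · obtain ⟨l, hl⟩ := exists_abs_le_tendsto_ultrafilter U fun n => hB n x hx
      exact ⟨l, fun _ => hl⟩
    · exact ⟨0, fun h => absurd h hx⟩
  choose h hh using hlim
  refine ⟨h, fun x hx => (hh x hx).1, ?_⟩
  have htend := (EquicontinuousOn.tendsto_uniformOnFun_iff_pi' (𝔖 := {K}) (by simpa using hK)
    (by simpa using hu) U h).2 (tendsto_pi_nhds.2 fun x => (hh x (by simpa using x.2)).2)
  exact UniformOnFun.tendsto_iff_tendstoUniformlyOn.1 htend K rfl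

end Compactness

/-! ### Rescaled interior estimates -/

section Rescaling

variable {d : ℕ} {lam Lam : ℝ} {G : Mat d → ℝ}

lemma UniformlyElliptic.rescale (hG : UniformlyElliptic lam Lam G) {c : ℝ} (hc : 0 < c) :
    UniformlyElliptic lam Lam (fun M => c * G (c⁻¹ • M)) := by
  refine ⟨by simp only [smul_zero, hG.1, mul_zero], fun M N hM hN => ?_⟩
  have hinv : 0 < c⁻¹ := inv_pos.2 hc
  have hell := hG.2 (c⁻¹ • M) (c⁻¹ • N) (hM.smul (.all _)) (hN.smul hinv.le)
  rw [← smul_add, matOpNorm_smul, abs_of_pos hinv] at hell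
  have hcancel (t : ℝ) : c * (t * (c⁻¹ * matOpNorm N)) = t * matOpNorm N := by field_simp
  rw [← mul_sub, ← hcancel lam, ← hcancel Lam]
  exact ⟨mul_le_mul_of_nonneg_left hell.1 hc.le, mul_le_mul_of_nonneg_left hell.2 hc.le⟩

lemma quadPoly_rescale (z p : Euc d) (M : Mat d) {r : ℝ} (hr : r ≠ 0) (x y : Euc d) :
    quadPoly (x + r • z) (r⁻¹ • p) ((r ^ 2)⁻¹ • M) (x + r • y) = quadPoly z p M y := by
  have hdiff : x + r • y - (x + r • z) = r • (y - z) := by module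
  simp only [quadPoly, hdiff, quadForm_smul, quadForm_apply_smul, real_inner_smul_left,
    real_inner_smul_right]
  field_simp

lemma QuadSubSol.rescale {u : Euc d → ℝ} {s t : Set (Euc d)} (hu : QuadSubSol G u s) {r : ℝ}
    (hr : 0 < r) {x : Euc d} (hmaps : MapsTo (fun y => x + r • y) t s) :
    QuadSubSol (fun M => r ^ 2 * G ((r ^ 2)⁻¹ • M)) (fun y => u (x + r • y)) t := by
  intro z hz p M hM htouch
  have hinv (w : Euc d) : x + r • (r⁻¹ • (w - x)) = w := by
    rw [smul_inv_smul₀ hr.ne', add_sub_cancel]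
  have htend : Tendsto (fun w => r⁻¹ • (w - x)) (𝓝 (x + r • z)) (𝓝 z) := by
    refine Continuous.tendsto' (by fun_prop) _ _ ?_
    rw [add_sub_cancel_left, inv_smul_smul₀ hr.ne']
  refine mul_nonneg (sq_nonneg r) (hu _ (hmaps hz) (r⁻¹ • p) _ (hM.smul (.all _)) ?_)
  filter_upwards [htend.eventually htouch] with w hw
  rwa [hinv, ← quadPoly_rescale z p M hr.ne' x, hinv] at hw

end Rescaling

section Regularity

variable {E : Type*} [NormedAddCommGroup E] [InnerProductSpace ℝ E] [CompleteSpace E]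
  {α C : ℝ} {h : E → ℝ} {Dh : E → E} {s : Set E}

/-- `h` is differentiable on `s` with gradient `Dh`, and `C` bounds its `C^{1,α}` norm, encoded as
a bound for `|h| + ‖Dh‖` and for the `α`-Hölder seminorm of `Dh`. -/
def C1AlphaBound (α C : ℝ) (h : E → ℝ) (Dh : E → E) (s : Set E) : Prop :=
  (∀ x ∈ s, HasGradientAt h (Dh x) x) ∧ (∀ x ∈ s, |h x| + ‖Dh x‖ ≤ C) ∧
    ∀ x ∈ s, ∀ y ∈ s, ‖Dh x - Dh y‖ ≤ C * ‖x - y‖ ^ α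

lemma C1AlphaBound.nonneg (hh : C1AlphaBound α C h Dh s) {x : E} (hx : x ∈ s) : 0 ≤ C :=
  (by positivity : 0 ≤ |h x| + ‖Dh x‖).trans (hh.2.1 x hx)

lemma C1AlphaBound.norm_gradient_le (hh : C1AlphaBound α C h Dh s) {x : E} (hx : x ∈ s) :
    ‖Dh x‖ ≤ C :=
  (le_add_of_nonneg_left (abs_nonneg _)).trans (hh.2.1 x hx)

lemma c1AlphaBound_gradient (hh : C1AlphaBound α C h Dh s) :
    C1AlphaBound α C h (gradient h) s := by
  have heq (x) (hx : x ∈ s) : gradient h x = Dh x := (hh.1 x hx).gradient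
  refine ⟨fun x hx => ?_, fun x hx => ?_, fun x hx y hy => ?_⟩
  · rw [heq x hx]
    exact hh.1 x hx
  · rw [heq x hx]
    exact hh.2.1 x hx
  · rw [heq x hx, heq y hy]
    exact hh.2.2 x hx y hy

lemma C1AlphaBound.unscale (hα₁ : α ≤ 1) {x : E} {r ρ : ℝ} (hr₀ : 0 < r) (hr₁ : r ≤ 1)
    (hρ : 0 < ρ)
    (hh : C1AlphaBound α C (fun y => h (x + r • y)) Dh (ball 0 ρ)) :
    C1AlphaBound α (r⁻¹ ^ 2 * C) h (fun w => r⁻¹ • Dh (r⁻¹ • (w - x))) (ball x (r * ρ)) := by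
  have hC : 0 ≤ C := hh.nonneg (mem_ball_self hρ)
  have hinv : 1 ≤ r⁻¹ := (one_le_inv₀ hr₀).2 hr₁
  have hinv₀ : 0 ≤ r⁻¹ := (inv_pos.2 hr₀).le
  have hmem (w : E) (hw : w ∈ ball x (r * ρ)) : r⁻¹ • (w - x) ∈ ball (0 : E) ρ := by
    rw [mem_ball_iff_norm] at hw
    rwa [mem_ball_zero_iff, norm_smul, Real.norm_of_nonneg (by positivity), inv_mul_lt_iff₀ hr₀]
  have hback (w : E) : x + r • (r⁻¹ • (w - x)) = w := by
    rw [smul_inv_smul₀ hr₀.ne', add_sub_cancel]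
  refine ⟨fun w hw => ?_, fun w hw => ?_, fun w hw w' hw' => ?_⟩
  · have hchange : HasFDerivAt (fun w : E => r⁻¹ • (w - x)) (r⁻¹ • ContinuousLinearMap.id ℝ E) w :=
      ((hasFDerivAt_id w).sub_const x).const_smul r⁻¹
    have hcomp := (hh.1 _ (hmem w hw)).hasFDerivAt.comp w hchange
    simp only [Function.comp_def, hback] at hcomp
    refine hasGradientAt_iff_hasFDerivAt.2 (hcomp.congr_fderiv ?_)
    ext z
    simp
  · have hbound := hh.2.1 _ (hmem w hw)
    simp only [hback] at hbound
    rw [norm_smul, Real.norm_of_nonneg hinv₀]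
    calc |h w| + r⁻¹ * ‖Dh (r⁻¹ • (w - x))‖
        ≤ r⁻¹ ^ 2 * |h w| + r⁻¹ ^ 2 * ‖Dh (r⁻¹ • (w - x))‖ := by
          gcongr
          · exact le_mul_of_one_le_left (abs_nonneg _) (one_le_pow₀ hinv)
          · exact le_self_pow₀ hinv two_ne_zero
      _ ≤ r⁻¹ ^ 2 * C := by rw [← mul_add]; gcongr
  · have hholder := hh.2.2 _ (hmem w hw) _ (hmem w' hw')
    rw [← smul_sub, sub_sub_sub_cancel_right, norm_smul, Real.norm_of_nonneg hinv₀,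
      Real.mul_rpow hinv₀ (norm_nonneg _)] at hholder
    rw [← smul_sub, norm_smul, Real.norm_of_nonneg hinv₀]
    calc r⁻¹ * ‖Dh (r⁻¹ • (w - x)) - Dh (r⁻¹ • (w' - x))‖
        ≤ r⁻¹ * (C * (r⁻¹ * ‖w - w'‖ ^ α)) := by
          grw [hholder, Real.rpow_le_self_of_one_le hinv hα₁]
      _ = r⁻¹ ^ 2 * C * ‖w - w'‖ ^ α := by ring

lemma C1AlphaBound.of_forall_ball (hα₀ : 0 ≤ α) (hα₁ : α ≤ 1) {ρ : ℝ} (hρ₀ : 0 < ρ) (hρ₁ : ρ ≤ 1)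
    (hloc : ∀ x ∈ s, C1AlphaBound α C h Dh (ball x ρ)) :
    C1AlphaBound α (2 / ρ * C) h Dh s := by
  have hfactor : 1 ≤ 2 / ρ := (one_le_div hρ₀).2 (by linarith)
  have hself (x : E) : x ∈ ball x ρ := mem_ball_self hρ₀
  have hC (x) (hx : x ∈ s) : 0 ≤ C := (hloc x hx).nonneg (hself x)
  have hCle (x) (hx : x ∈ s) : C ≤ 2 / ρ * C := le_mul_of_one_le_left (hC x hx) hfactor
  refine ⟨fun x hx => (hloc x hx).1 x (hself x),
    fun x hx => ((hloc x hx).2.1 x (hself x)).trans (hCle x hx), fun x hx y hy => ?_⟩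
  have hC₀ := hC x hx
  rcases lt_or_ge ‖x - y‖ ρ with hxy | hxy
  · grw [(hloc y hy).2.2 x (mem_ball_iff_norm.2 hxy) y (hself y), ← hCle x hx]
  · have hpow : ρ ≤ ‖x - y‖ ^ α :=
      (Real.self_le_rpow_of_le_one hρ₀.le hρ₁ hα₁).trans (Real.rpow_le_rpow hρ₀.le hxy hα₀)
    have hx' := (hloc x hx).norm_gradient_le (hself x)
    have hy' := (hloc y hy).norm_gradient_le (hself y)
    calc ‖Dh x - Dh y‖ ≤ ‖Dh x‖ + ‖Dh y‖ := norm_sub_le _ _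
      _ ≤ C + C := by gcongr
      _ = 2 / ρ * C * ρ := by field_simp; ring
      _ ≤ 2 / ρ * C * ‖x - y‖ ^ α := by gcongr

end Regularity

section InteriorEstimate

variable {d : ℕ} {lam Lam α C₀ : ℝ}

/-- Every `(λ,Λ)`-elliptic equation `G (D²h) = 0` has interior `C^{1,α}` estimates with constant
`C₀` on the unit ball, stated for normalized solutions. -/
def C1AlphaEstimate (d : ℕ) (lam Lam α C₀ : ℝ) : Prop :=
  ∀ G : Mat d → ℝ, UniformlyElliptic lam Lam G → ∀ h : Euc d → ℝ, ContinuousOn h (ball 0 1) →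
    (∀ x ∈ ball (0 : Euc d) 1, |h x| ≤ 1) → ViscSolPure G (fun _ => 0) h (ball 0 1) →
      ∃ Dh : Euc d → Euc d, C1AlphaBound α C₀ h Dh (ball 0 (3 / 4))

lemma C1AlphaEstimate.c1AlphaBound_ball (hreg : C1AlphaEstimate d lam Lam α C₀) (hα₁ : α ≤ 1)
    (hLam : 0 < Lam) {G : Mat d → ℝ} (hG : UniformlyElliptic lam Lam G) {h : Euc d → ℝ}
    {x : Euc d} {r : ℝ} (hr₀ : 0 < r) (hr₁ : r ≤ 1)
    (hcont : ContinuousOn h (ball x r)) (hbound : ∀ y ∈ ball x r, |h y| ≤ 1)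
    (hsub : QuadSubSol G h (ball x r))
    (hsuper : QuadSubSol (fun M => -G (-M)) (fun y => -h y) (ball x r)) :
    C1AlphaBound α (r⁻¹ ^ 2 * C₀) h (gradient h) (ball x (r * (3 / 4))) := by
  have hmaps : MapsTo (fun y : Euc d => x + r • y) (ball 0 1) (ball x r) := by
    intro y hy
    rw [mem_ball_zero_iff] at hy
    rw [mem_ball_iff_norm, add_sub_cancel_left, norm_smul, Real.norm_of_nonneg hr₀.le]
    exact mul_lt_of_lt_one_right hr₀ hy
  have hGr := hG.rescale (c := r ^ 2) (by positivity)
  have hsuper' : QuadSubSol (fun M => -(r ^ 2 * G ((r ^ 2)⁻¹ • -M)))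
      (fun y => -h (x + r • y)) (ball 0 1) := by
    simpa only [smul_neg, mul_neg] using hsuper.rescale hr₀ hmaps
  obtain ⟨Dh, hDh⟩ := hreg _ hGr (fun y => h (x + r • y))
    (hcont.comp (by fun_prop) hmaps) (fun y hy => hbound _ (hmaps hy))
    ⟨(hsub.rescale hr₀ hmaps).viscSubSolPure hLam hGr,
      QuadSubSol.viscSuperSolPure hLam hGr hsuper'⟩
  exact c1AlphaBound_gradient (hDh.unscale hα₁ hr₀ hr₁ (by norm_num))

lemma C1AlphaEstimate.c1AlphaBound (hreg : C1AlphaEstimate d lam Lam α C₀) (hα₀ : 0 ≤ α)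
    (hα₁ : α ≤ 1) (hLam : 0 < Lam) {G : Mat d → ℝ} (hG : UniformlyElliptic lam Lam G)
    {h : Euc d → ℝ} {s t : Set (Euc d)} {r : ℝ} (hr₀ : 0 < r) (hr₁ : r ≤ 1)
    (hst : ∀ x ∈ s, ball x r ⊆ t) (hcont : ContinuousOn h t) (hbound : ∀ x ∈ t, |h x| ≤ 1)
    (hsub : QuadSubSol G h t) (hsuper : QuadSubSol (fun M => -G (-M)) (fun x => -h x) t) :
    C1AlphaBound α (8 / 3 * r⁻¹ ^ 3 * C₀) h (gradient h) s := by
  have hloc := C1AlphaBound.of_forall_ball hα₀ hα₁ (by positivity) (by linarith) fun x hx =>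
    hreg.c1AlphaBound_ball hα₁ hLam hG hr₀ hr₁ (hcont.mono (hst x hx))
      (fun y hy => hbound y (hst x hx hy)) (fun y hy => hsub y (hst x hx hy))
      (fun y hy => hsuper y (hst x hx hy))
  have hconst : 2 / (r * (3 / 4)) * (r⁻¹ ^ 2 * C₀) = 8 / 3 * r⁻¹ ^ 3 * C₀ := by
    field_simp
    ring
  rwa [hconst] at hloc

end InteriorEstimate

/-! ### The approximation lemma -/

section Approximation

variable {d : ℕ} {lam Lam Θ α C₀ : ℝ}

lemma SmallSubSol.mono {ε ε' : ℝ} {F : Mat d → ℝ} {q : Euc d} {u : Euc d → ℝ}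
    (hu : SmallSubSol Θ ε F q u) (hε : ε ≤ ε') : SmallSubSol Θ ε' F q u := by
  obtain ⟨θ, f, hθ, hf, hsub⟩ := hu
  exact ⟨θ, f, hθ, fun x hx => (hf x hx).trans hε, hsub⟩

lemma ViscSol.smallSubSol_neg {ε : ℝ} {F : Mat d → ℝ} {θ f : Euc d → ℝ} {q : Euc d}
    {u : Euc d → ℝ} (hu : ViscSol F θ f q u) (hθ : ∀ x ∈ ball (0 : Euc d) 1, |θ x| ≤ Θ)
    (hf : ∀ x ∈ ball (0 : Euc d) 1, |f x| * (1 + ‖q‖) ^ (-θ x) ≤ ε) :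
    SmallSubSol Θ ε (fun M => -F (-M)) (-q) (fun x => -u x) := by
  refine ⟨θ, fun x => -f x, hθ, ?_, hu.2.viscSubSol_neg⟩
  simpa only [abs_neg, norm_neg] using hf

lemma exists_quadSubSol_tendstoUniformlyOn {ι : Type*} (U : Ultrafilter ι) (hlam : 0 < lam)
    (hLam : 0 < Lam) {F : ι → Mat d → ℝ} {q : ι → Euc d} {u : ι → Euc d → ℝ} {ε : ι → ℝ} {L : ℝ}
    (hF : ∀ n, UniformlyElliptic lam Lam (F n)) (hu : ∀ n, ContinuousOn (u n) (ball 0 1))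
    (hu1 : ∀ n, ∀ x ∈ ball (0 : Euc d) 1, |u n x| ≤ 1)
    (hsub : ∀ n, SmallSubSol Θ (ε n) (F n) (q n) (u n))
    (hsuper : ∀ n, SmallSubSol Θ (ε n) (fun M => -F n (-M)) (-q n) (fun x => -u n x))
    (hε : Tendsto ε U (𝓝 0))
    (hlip : ∀ n, ∀ x y : Euc d, ‖x‖ ≤ 15 / 16 → ‖y - x‖ ≤ 1 / 32 →
      u n x - u n y ≤ L * ‖x - y‖) :
    ∃ (G : Mat d → ℝ) (h : Euc d → ℝ), UniformlyElliptic lam Lam G ∧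
      ContinuousOn h (ball 0 (15 / 16)) ∧ (∀ x ∈ ball (0 : Euc d) (15 / 16), |h x| ≤ 1) ∧
      QuadSubSol G h (ball 0 (15 / 16)) ∧
      QuadSubSol (fun M => -G (-M)) (fun x => -h x) (ball 0 (15 / 16)) ∧
      TendstoUniformlyOn u h U (ball 0 (15 / 16)) := by
  have hK : closedBall (0 : Euc d) (15 / 16) ⊆ ball 0 1 := closedBall_subset_ball (by norm_num)
  have hsK : ball (0 : Euc d) (15 / 16) ⊆ closedBall 0 (15 / 16) := ball_subset_closedBall
  have hequi : EquicontinuousOn u (closedBall 0 (15 / 16)) := by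
    refine equicontinuousOn_of_sub_le_mul_dist (L := L) (r := 1 / 32) (by norm_num)
      fun n x hx y _ hxy => ?_
    rw [dist_eq_norm] at hxy ⊢
    exact hlip n x y (mem_closedBall_zero_iff.1 hx) (by rw [norm_sub_rev]; exact hxy.le)
  obtain ⟨G, hG, hFG⟩ := exists_uniformlyElliptic_tendsto U hlam.le hLam.le hF
  obtain ⟨h, hh1, hconv⟩ := exists_tendstoUniformlyOn_of_equicontinuousOn U
    (isCompact_closedBall 0 (15 / 16)) hequi fun n x hx => hu1 n x (hK hx)
  have hcont (n) : ContinuousOn (u n) (ball 0 (15 / 16)) := (hu n).mono (hsK.trans hK)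
  replace hconv := hconv.mono hsK
  refine ⟨G, h, hG, hconv.continuousOn (.of_forall hcont), fun x hx => hh1 x (hsK hx),
    quadSubSol_of_tendstoUniformlyOn U hlam.le hLam hG hFG isOpen_ball (hsK.trans hK) hcont hsub
      hε hconv,
    quadSubSol_of_tendstoUniformlyOn U hlam.le hLam hG.neg_comp_neg
      (fun M hM => (hFG (-M) hM.neg).neg) isOpen_ball (hsK.trans hK) (fun n => (hcont n).neg)
      hsuper hε ?_, hconv⟩
  exact uniformContinuous_neg.comp_tendstoUniformlyOn hconv

lemma C1AlphaEstimate.exists_approximation (hreg : C1AlphaEstimate d lam Lam α C₀)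
    (hlam : 0 < lam) (hLam : 0 < Lam) (hα : α ∈ Icc 0 1) (Θ : ℝ) {δ : ℝ} (hδ : 0 < δ) :
    ∃ ε > 0, ∀ (F : Mat d → ℝ) (q : Euc d) (u : Euc d → ℝ), UniformlyElliptic lam Lam F →
      ContinuousOn u (ball 0 1) → (∀ x ∈ ball (0 : Euc d) 1, |u x| ≤ 1) →
      SmallSubSol Θ ε F q u → SmallSubSol Θ ε (fun M => -F (-M)) (-q) (fun x => -u x) →
      ∃ h, C1AlphaBound α (8 / 3 * 8 ^ 3 * C₀) h (gradient h) (ball 0 (3 / 4)) ∧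
        ∀ x ∈ ball (0 : Euc d) (3 / 4), |u x - h x| ≤ δ := by
  obtain ⟨ε₁, hε₁, L, -, hlip⟩ := exists_forall_sub_le_mul_norm_sub (d := d) hlam hLam.le Θ
  by_contra! hcon
  have hε (n : ℕ) : 0 < ε₁ / (n + 1) := by positivity
  choose F q u hF hu hu1 hsub hsuper hbad using fun n => hcon _ (hε n)
  have hε₁n (n : ℕ) : ε₁ / (n + 1) ≤ ε₁ := div_le_self hε₁.le (by simp)
  have hε0 : Tendsto (fun n : ℕ => ε₁ / (n + 1)) (hyperfilter ℕ) (𝓝 0) := by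
    refine Tendsto.mono_left ?_ Nat.hyperfilter_le_atTop
    simpa [div_eq_mul_inv] using (tendsto_one_div_add_atTop_nhds_zero_nat (𝕜 := ℝ)).const_mul ε₁
  obtain ⟨G, h, hG, hcont, hh1, hQsub, hQsuper, hconv⟩ :=
    exists_quadSubSol_tendstoUniformlyOn (hyperfilter ℕ) hlam hLam hF hu hu1 hsub hsuper hε0
      fun n => hlip (F n) (q n) (u n) (hF n) (hu n) (hu1 n) ((hsub n).mono (hε₁n n))
        ((hsuper n).mono (hε₁n n))
  have hballs : ∀ x ∈ ball (0 : Euc d) (3 / 4), ball x 8⁻¹ ⊆ ball 0 (15 / 16) := fun x hx =>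
    ball_subset_ball' (by linarith [mem_ball.1 hx])
  have hbound := hreg.c1AlphaBound hα.1 hα.2 hLam hG (by norm_num) (by norm_num) hballs hcont hh1
    hQsub hQsuper
  rw [inv_inv] at hbound
  obtain ⟨n, hn⟩ := (Metric.tendstoUniformlyOn_iff.1 hconv δ hδ).exists
  obtain ⟨x, hx, hxδ⟩ := hbad n h hbound
  have hclose := hn x (ball_subset_ball (by norm_num) hx)
  rw [dist_comm, Real.dist_eq] at hclose
  exact hxδ.not_gt hclose

end Approximation

theorem statement2_general {d : ℕ} {lam Lam Θ α C₀ : ℝ} (hlam : 0 < lam) (hLam : 0 < Lam)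
    (hα : α ∈ Icc 0 1) (hreg : C1AlphaEstimate d lam Lam α C₀) {δ : ℝ} (hδ : 0 < δ) :
    ∃ ε > 0, ∀ F : Mat d → ℝ, UniformlyElliptic lam Lam F →
      ∀ θ : Euc d → ℝ, (∀ x ∈ ball (0 : Euc d) 1, |θ x| ≤ Θ) →
      ∀ (q : Euc d) (f : Euc d → ℝ),
        (∀ x ∈ ball (0 : Euc d) 1, |f x| * (1 + ‖q‖) ^ (-θ x) ≤ ε) →
      ∀ u : Euc d → ℝ, ContinuousOn u (ball 0 1) → (∀ x ∈ ball (0 : Euc d) 1, |u x| ≤ 1) →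
        ViscSol F θ f q u →
      ∃ h, C1AlphaBound α (8 / 3 * 8 ^ 3 * C₀) h (gradient h) (ball 0 (3 / 4)) ∧
        ∀ x ∈ ball (0 : Euc d) (3 / 4), |u x - h x| ≤ δ := by
  obtain ⟨ε, hε, happrox⟩ := hreg.exists_approximation hlam hLam hα Θ hδ
  exact ⟨ε, hε, fun F hF θ hθ q f hf u hu hu1 hsol =>
    happrox F q u hF hu hu1 ⟨θ, f, hθ, hf, hsol.1⟩ (hsol.smallSubSol_neg hθ hf)⟩

/-- Approximation Lemma (Lemma 5.1). -/
theorem statement2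
    (d : ℕ) (hd : 1 ≤ d) (lam Lam : ℝ) (hlam : 0 < lam) (hlL : lam ≤ Lam)
    (Θ : ℝ) (hΘ : 0 ≤ Θ)
    (α C₀ : ℝ) (hα : α ∈ Set.Ioo (0:ℝ) 1) (hC₀ : 0 < C₀)
    (hreg : ∀ G : Mat d → ℝ, UniformlyElliptic lam Lam G →
      ∀ h : Euc d → ℝ, ContinuousOn h (ball 0 1) →
      ViscSolPure G (fun _ => (0:ℝ)) h (ball 0 1) →
      ∃ Dh : Euc d → Euc d,
        (∀ y ∈ ball (0 : Euc d) (3/4), HasGradientAt h (Dh y) y) ∧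
        ∀ K : ℝ, (∀ x ∈ ball (0 : Euc d) 1, |h x| ≤ K) →
          (∀ x ∈ ball (0 : Euc d) (3/4), |h x| + ‖Dh x‖ ≤ C₀ * K) ∧
          ∀ x ∈ ball (0 : Euc d) (3/4), ∀ y ∈ ball (0 : Euc d) (3/4),
            ‖Dh x - Dh y‖ ≤ C₀ * K * ‖x - y‖ ^ α) :
    ∃ C > 0, ∀ δ > 0, ∃ ε > 0,
      ∀ (F : Mat d → ℝ), UniformlyElliptic lam Lam F →
      ∀ θ : Euc d → ℝ, ContinuousOn θ (closedBall 0 1) →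
        (∀ x ∈ closedBall (0 : Euc d) 1, -1 < θ x ∧ θ x ≤ Θ) →
      ∀ q : Euc d,
      ∀ f : Euc d → ℝ, ContinuousOn f (ball 0 1) →
        (∀ x ∈ ball (0 : Euc d) 1, |f x| * (1 + ‖q‖) ^ (-(θ x)) ≤ ε) →
      ∀ u : Euc d → ℝ, ContinuousOn u (ball 0 1) →
        (∀ x ∈ ball (0 : Euc d) 1, |u x| ≤ 1) →
        ViscSol F θ f q u →
      ∃ h : Euc d → ℝ, ∃ Dh : Euc d → Euc d,
        (∀ y ∈ ball (0 : Euc d) (3/4), HasGradientAt h (Dh y) y) ∧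
        (∀ x ∈ ball (0 : Euc d) (3/4), |h x| + ‖Dh x‖ ≤ C) ∧
        (∀ x ∈ ball (0 : Euc d) (3/4), ∀ y ∈ ball (0 : Euc d) (3/4),
          ‖Dh x - Dh y‖ ≤ C * ‖x - y‖ ^ α) ∧
        ∀ x ∈ ball (0 : Euc d) (1/2), |u x - h x| ≤ δ := by
  refine ⟨8 / 3 * 8 ^ 3 * C₀, by positivity, fun δ hδ => ?_⟩
  have hest : C1AlphaEstimate d lam Lam α C₀ := fun G hG h hh hh1 hsol => by
    obtain ⟨Dh, hgrad, hbound⟩ := hreg G hG h hh hsol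
    exact ⟨Dh, hgrad, by simpa only [mul_one] using hbound 1 hh1⟩
  obtain ⟨ε, hε, happrox⟩ := statement2_general (Θ := max Θ 1) hlam (hlam.trans_le hlL)
    (Ioo_subset_Icc_self hα) hest hδ
  refine ⟨ε, hε, fun F hF θ _ hθ q f _ hf u hu hu1 hsol => ?_⟩
  have hθ' : ∀ x ∈ ball (0 : Euc d) 1, |θ x| ≤ max Θ 1 := fun x hx => by
    obtain ⟨hlower, hupper⟩ := hθ x (ball_subset_closedBall hx)
    exact abs_le.2 ⟨by linarith [le_max_right Θ 1], hupper.trans (le_max_left _ _)⟩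
  obtain ⟨h, ⟨hgrad, hnorm, hholder⟩, hclose⟩ := happrox F hF θ hθ' q f hf u hu hu1 hsol
  exact ⟨h, gradient h, hgrad, hnorm, hholder,
    fun x hx => hclose x (ball_subset_ball (by norm_num) hx)⟩

end
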